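/- Let q be a power of an odd prime p. The Borel subgroup B of SU_3(q) has exactly one rational irreducible complex character ϑ of degree q²−q whose Frobenius–Schur indicator is +1; this ϑ is the character of a representation over ℚ, and its orthogonal discriminant is (−1)^{(q−1)/2}·q. -/

import Mathlib

open Matrix

noncomputable section

namespace Paper

/-- The character of a matrix representation. -/
def charOf {G : Type} [Group G] {n : ℕ} (ρ : G →* GL (Fin n) ℂ) : G → ℂ :=
  fun g => Matrix.trace ((ρ g : Matrix (Fin n) (Fin n) ℂ))

/-- Irreducibility of a complex matrix representation. -/
def IsIrredRep {G : Type} [Group G] {n : ℕ} (ρ : G →* GL (Fin n) ℂ) : Prop :=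
  0 < n ∧ ∀ W : Submodule ℂ (Fin n → ℂ),
    (∀ (g : G), ∀ v ∈ W, (ρ g : Matrix (Fin n) (Fin n) ℂ).mulVec v ∈ W) → W = ⊥ ∨ W = ⊤

/-- `χ` is an irreducible complex character of `G`. -/
def IsIrrChar {G : Type} [Group G] (χ : G → ℂ) : Prop :=
  ∃ (n : ℕ) (ρ : G →* GL (Fin n) ℂ), IsIrredRep ρ ∧ χ = charOf ρ

/-- The character field `ℚ(χ)`, as a subfield of `ℂ`. -/
def charField {G : Type} [Group G] (χ : G → ℂ) : Subfield ℂ :=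
  Subfield.closure (Set.range χ)

/-- The subfield of real numbers inside `ℂ`. -/
def realsIn : Subfield ℂ := Subfield.closure (Set.range ((↑) : ℝ → ℂ))

/-- The character field of `χ` is not contained in `ℝ`. -/
def NotReal {G : Type} [Group G] (χ : G → ℂ) : Prop := ¬ charField χ ≤ realsIn

/-- `χ` has unitary discriminant `d`. -/
def HasUnitaryDisc {G : Type} [Group G] (χ : G → ℂ) (d : ℂ) : Prop :=
  ∀ (n : ℕ) (ρ : G →* GL (Fin n) ℂ),
    χ = charOf ρ →
    (∀ g i j, ((ρ g : Matrix (Fin n) (Fin n) ℂ)) i j ∈ charField χ) →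
    ∀ H : Matrix (Fin n) (Fin n) ℂ,
      (∀ i j, H i j ∈ charField χ) →
      IsUnit H.det →
      H.conjTranspose = H →
      (∀ g, ((ρ g : Matrix (Fin n) (Fin n) ℂ)).conjTranspose * H *
        (ρ g : Matrix (Fin n) (Fin n) ℂ) = H) →
      ∃ z ∈ charField χ, z ≠ 0 ∧
        (-1 : ℂ) ^ (n * (n - 1) / 2) * H.det = d * (z * (starRingEnd ℂ) z)

/-- `χ` has orthogonal discriminant `d`. -/
def HasOrthDisc {G : Type} [Group G] (χ : G → ℂ) (d : ℂ) : Prop :=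
  ∀ (n : ℕ) (ρ : G →* GL (Fin n) ℂ),
    χ = charOf ρ →
    (∀ g i j, ((ρ g : Matrix (Fin n) (Fin n) ℂ)) i j ∈ charField χ) →
    ∀ H : Matrix (Fin n) (Fin n) ℂ,
      (∀ i j, H i j ∈ charField χ) →
      IsUnit H.det →
      H.transpose = H →
      (∀ g, ((ρ g : Matrix (Fin n) (Fin n) ℂ)).transpose * H *
        (ρ g : Matrix (Fin n) (Fin n) ℂ) = H) →
      ∃ z ∈ charField χ, z ≠ 0 ∧
        (-1 : ℂ) ^ (n * (n - 1) / 2) * H.det = d * z ^ 2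

/-- `χ` is a rational character. -/
def IsRationalChar {G : Type} [Group G] (χ : G → ℂ) : Prop :=
  ∀ g, ∃ r : ℚ, χ g = (r : ℂ)

/-- `χ` is the character of a representation over `ℚ`. -/
def RealizableOverQ {G : Type} [Group G] (χ : G → ℂ) : Prop :=
  ∃ (n : ℕ) (ρ : G →* GL (Fin n) ℂ), χ = charOf ρ ∧
    ∀ g i j, ∃ r : ℚ, ((ρ g : Matrix (Fin n) (Fin n) ℂ)) i j = (r : ℂ)

end Paper

namespace Paper

variable (p k : ℕ) (F : Type) [Field F] [Fintype F] [ExpChar F p]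

/-- The Gram matrix `Ω` (anti-diagonal ones). -/
def Om : Matrix (Fin 3) (Fin 3) F :=
  Matrix.of fun i j => if (i : ℕ) + (j : ℕ) = 2 then 1 else 0

/-- Entrywise `q`-power Frobenius `Φ` on `3×3` matrices, where `q = p^k`. -/
def Phi : Matrix (Fin 3) (Fin 3) F →+* Matrix (Fin 3) (Fin 3) F :=
  (iterateFrobenius F p k).mapMatrix

/-- The special unitary group `SU₃(q) = {g ∈ SL₃(F_{q²}) : Φ(g)ᵀ·Ω·g = Ω}`. -/
def SU3 : Subgroup (Matrix.SpecialLinearGroup (Fin 3) F) where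
  carrier := {g | (Phi p k F g.val)ᵀ * Om F * g.val = Om F}
  one_mem' := by
    show (Phi p k F (1 : Matrix.SpecialLinearGroup (Fin 3) F).val)ᵀ * Om F *
        (1 : Matrix.SpecialLinearGroup (Fin 3) F).val = Om F
    simp
  mul_mem' := by
    intro a b ha hb
    show (Phi p k F (a.val * b.val))ᵀ * Om F * (a.val * b.val) = Om F
    have ha' : (Phi p k F a.val)ᵀ * Om F * a.val = Om F := ha
    have hb' : (Phi p k F b.val)ᵀ * Om F * b.val = Om F := hb
    calc (Phi p k F (a.val * b.val))ᵀ * Om F * (a.val * b.val)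
        = (Phi p k F b.val)ᵀ * ((Phi p k F a.val)ᵀ * Om F * a.val) * b.val := by
          rw [_root_.map_mul, Matrix.transpose_mul]; simp only [Matrix.mul_assoc]
      _ = (Phi p k F b.val)ᵀ * Om F * b.val := by rw [ha']
      _ = Om F := hb'
  inv_mem' := by
    intro a ha
    show (Phi p k F (a⁻¹).val)ᵀ * Om F * (a⁻¹).val = Om F
    have ha' : (Phi p k F a.val)ᵀ * Om F * a.val = Om F := ha
    have h1 : a.val * (a⁻¹).val = 1 := by
      rw [← Matrix.SpecialLinearGroup.coe_mul, mul_inv_cancel,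
        Matrix.SpecialLinearGroup.coe_one]
    nth_rewrite 1 [← ha']
    calc (Phi p k F (a⁻¹).val)ᵀ * ((Phi p k F a.val)ᵀ * Om F * a.val) * (a⁻¹).val
        = (Phi p k F a.val * Phi p k F (a⁻¹).val)ᵀ * Om F * (a.val * (a⁻¹).val) := by
          rw [Matrix.transpose_mul]; simp only [Matrix.mul_assoc]
      _ = Om F := by rw [← _root_.map_mul, h1, _root_.map_one, Matrix.transpose_one,
            Matrix.one_mul, Matrix.mul_one]

end Paper

namespace Paper

variable (p k : ℕ) (F : Type) [Field F] [Fintype F] [ExpChar F p]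

/-- The Borel subgroup of `SU₃(q)`: the upper triangular matrices in `SU₃(q)`. -/
def Borel : Subgroup ↥(SU3 p k F) where
  carrier := {g | Matrix.BlockTriangular ((g : Matrix.SpecialLinearGroup (Fin 3) F) :
    Matrix (Fin 3) (Fin 3) F) id}
  one_mem' := by
    show Matrix.BlockTriangular ((1 : Matrix.SpecialLinearGroup (Fin 3) F) :
      Matrix (Fin 3) (Fin 3) F) id
    rw [Matrix.SpecialLinearGroup.coe_one]
    exact Matrix.blockTriangular_one
  mul_mem' := by
    intro a b ha hb
    exact Matrix.BlockTriangular.mul ha hb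
  inv_mem' := by
    intro a ha
    show Matrix.BlockTriangular (((a⁻¹ : ↥(SU3 p k F)) : Matrix.SpecialLinearGroup (Fin 3) F) :
      Matrix (Fin 3) (Fin 3) F) id
    have hcoe : (((a⁻¹ : ↥(SU3 p k F)) : Matrix.SpecialLinearGroup (Fin 3) F) :
        Matrix (Fin 3) (Fin 3) F)
        = (((a : ↥(SU3 p k F)) : Matrix.SpecialLinearGroup (Fin 3) F) :
          Matrix (Fin 3) (Fin 3) F)⁻¹ := by
      rw [show ((a⁻¹ : ↥(SU3 p k F)) : Matrix.SpecialLinearGroup (Fin 3) F)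
        = ((a : ↥(SU3 p k F)) : Matrix.SpecialLinearGroup (Fin 3) F)⁻¹ from rfl]
      rw [Matrix.SpecialLinearGroup.coe_inv, Matrix.inv_def,
        ((a : ↥(SU3 p k F)) : Matrix.SpecialLinearGroup (Fin 3) F).2]
      simp
    rw [hcoe]
    haveI : Invertible (((a : ↥(SU3 p k F)) : Matrix.SpecialLinearGroup (Fin 3) F) :
        Matrix (Fin 3) (Fin 3) F) := by
      apply Matrix.invertibleOfIsUnitDet
      rw [((a : ↥(SU3 p k F)) : Matrix.SpecialLinearGroup (Fin 3) F).2]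
      exact isUnit_one
    exact Matrix.blockTriangular_inv_of_blockTriangular ha

end Paper

namespace Paper

/-- The Frobenius–Schur indicator of a character. -/
def FSind {G : Type} [Group G] (χ : G → ℂ) : ℂ :=
  (Nat.card G : ℂ)⁻¹ * ∑ᶠ g : G, χ (g * g)

/-!
The Borel subgroup is the semidirect product `U ⋊ F_{q²}ˣ` of the Heisenberg group `U` of order
`q³` by the torus.

*Uniqueness.* On a rational irreducible constituent of degree `q² - q` the centre `Z` of `U`
cannot act trivially, and the elements of the torus centralizing `U` act trivially because they
have odd order. Hence the character vanishes off the conjugates of `Z` times the norm one torus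
elements, where its values are a sign function of the torus, and the norm and the indicator
leave a single possibility.

*Existence.* A combination of the identity, the all-ones matrix and the Cayley matrix of a
quadratic character of the `b`-coordinate on `U` is an idempotent of rank `q² - q` commuting with
the permutation action of the group on the functions on `U`. On its image `Z` has no invariants,
so that the degree of every complex constituent is divisible by `q` and `q - 1`: the image is
absolutely irreducible, and being rational it carries an invariant positive definite form.

*Discriminant.* Restricted to `Z`, the character is `q` times the regular character minus the
trivial one. If `c` is an odd function on `Z` with odd integral values away from `1`, the element
`∑ c(a) a` acts by an invertible matrix that is skew for the form, so its determinant and that of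
the form agree up to a square, and the determinant is read off the regular representation.
-/

section FiniteSums

theorem sum_eq_add_card_sub_one_mul {α R : Type*} [Fintype α] [CommRing R] {f : α → R} {c : R}
    (a : α) (h : ∀ x ≠ a, f x = c) : ∑ x, f x = f a + (Nat.card α - 1) * c := by
  classical
  rw [← Finset.add_sum_erase _ _ (Finset.mem_univ a),
    Finset.sum_congr rfl fun x hx => h x (Finset.ne_of_mem_erase hx), Finset.sum_const,
    Finset.card_erase_of_mem (Finset.mem_univ a), Finset.card_univ, nsmul_eq_mul,
    Nat.cast_sub (Fintype.card_pos_iff.2 ⟨a⟩), Nat.card_eq_fintype_card, Nat.cast_one]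

end FiniteSums

section LinearAlgebra

open Polynomial

variable {K ι κ : Type*} [Field K] [Fintype ι] [DecidableEq ι]

theorem eval_multiset_prod_X_sub_C (s : Multiset K) (x : K) :
    (s.map fun y => x - y).prod = (s.map fun y => X - C y).prod.eval x := by
  rw [eval_multiset_prod, Multiset.map_map]
  simp only [Function.comp_apply, eval_sub, eval_X, eval_C]

theorem det_aeval_eq_prod_roots_charpoly [IsAlgClosed K] (A : Matrix ι ι K) (p : K[X]) :
    (aeval A p).det = (A.charpoly.roots.map fun x => p.eval x).prod := by
  have charpoly_eq := (IsAlgClosed.splits A.charpoly).eq_prod_roots_of_monic A.charpoly_monic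
  have card_roots : A.charpoly.roots.card = Fintype.card ι := by
    rw [← (IsAlgClosed.splits A.charpoly).natDegree_eq_card_roots, A.charpoly_natDegree_eq_dim]
  induction IsAlgClosed.splits p using Submonoid.closure_induction with
  | mem p hp =>
    rcases hp with ⟨a, rfl⟩ | ⟨a, rfl⟩
    · simp [card_roots, Matrix.algebraMap_eq_diagonal]
    · have neg_linear : aeval A (X + C a) = -(scalar ι (-a) - A) := by
        simp [Matrix.algebraMap_eq_diagonal, Pi.algebraMap_def, ← Matrix.diagonal_neg]
      rw [neg_linear, Matrix.det_neg, ← Matrix.eval_charpoly, charpoly_eq,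
        ← eval_multiset_prod_X_sub_C, roots_multiset_prod_X_sub_C, ← card_roots,
        ← Multiset.card_map fun y => -a - y, ← Multiset.prod_map_neg]
      simp [Multiset.map_map, add_comm]
  | one => simp
  | mul p r _ _ hp hr => simp [hp, hr, Multiset.prod_map_mul]

theorem roots_charpoly_aeval [IsAlgClosed K] (A : Matrix ι ι K) (p : K[X]) :
    (aeval A p).charpoly.roots = A.charpoly.roots.map fun x => p.eval x := by
  suffices h : (aeval A p).charpoly
      = ((A.charpoly.roots.map fun x => p.eval x).map fun y => X - C y).prod by
    rw [h, roots_multiset_prod_X_sub_C]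
  refine Polynomial.funext fun x => ?_
  have h := det_aeval_eq_prod_roots_charpoly A (C x - p)
  rw [map_sub, aeval_C] at h
  rw [Matrix.eval_charpoly, ← eval_multiset_prod_X_sub_C, Multiset.map_map]
  simpa [Matrix.algebraMap_eq_diagonal, Pi.algebraMap_def] using h

theorem trace_pow_eq_sum_roots_charpoly [IsAlgClosed K] (A : Matrix ι ι K) (k : ℕ) :
    (A ^ k).trace = (A.charpoly.roots.map fun x => x ^ k).sum := by
  have h := roots_charpoly_aeval A (X ^ k)
  simp only [map_pow, aeval_X, eval_pow, eval_X] at h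
  rw [Matrix.trace_eq_sum_roots_charpoly, h]

theorem sum_map_eval_eq_of_sum_map_pow_eq {s t : Multiset K}
    (h : ∀ k : ℕ, (s.map fun x => x ^ k).sum = (t.map fun x => x ^ k).sum) (p : K[X]) :
    (s.map fun x => p.eval x).sum = (t.map fun x => p.eval x).sum := by
  induction p using Polynomial.induction_on' with
  | add p r hp hr => simp only [eval_add, Multiset.sum_map_add, hp, hr]
  | monomial k a => simp only [eval_monomial, Multiset.sum_map_mul_left, h k]

theorem eq_of_forall_sum_map_pow_eq [CharZero K] {s t : Multiset K}
    (h : ∀ k : ℕ, (s.map fun x => x ^ k).sum = (t.map fun x => x ^ k).sum) : s = t := by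
  classical
  ext μ
  -- A polynomial vanishing at all the elements of `s` and `t` except `μ`.
  let p : K[X] := ∏ ν ∈ (s.toFinset ∪ t.toFinset).erase μ, (X - C ν)
  have eval_p_μ : p.eval μ ≠ 0 := by
    rw [eval_prod, Finset.prod_ne_zero_iff]
    intro ν hν
    simpa [sub_eq_zero] using (Finset.ne_of_mem_erase hν).symm
  have eval_p : ∀ x ∈ s.toFinset ∪ t.toFinset, x ≠ μ → p.eval x = 0 := fun x hx hne => by
    rw [eval_prod]
    exact Finset.prod_eq_zero (Finset.mem_erase.2 ⟨hne, hx⟩) (by simp)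
  have sum_eval : ∀ u : Multiset K, (∀ x ∈ u, x ∈ s.toFinset ∪ t.toFinset) →
      (u.map fun x => p.eval x).sum = u.count μ * p.eval μ := fun u hu => by
    rw [Finset.sum_multiset_map_count, Finset.sum_eq_single μ, nsmul_eq_mul]
    · intro x hx hne
      rw [eval_p x (hu x (Multiset.mem_toFinset.1 hx)) hne, smul_zero]
    · intro hμ
      rw [Multiset.count_eq_zero.2 (by simpa using hμ), zero_smul]
  have h' := sum_map_eval_eq_of_sum_map_pow_eq h p
  rw [sum_eval s (by simp +contextual), sum_eval t (by simp +contextual)] at h'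
  exact_mod_cast mul_right_cancel₀ eval_p_μ h'

theorem det_mul_pow_eq_of_trace_pow_of_isAlgClosed [IsAlgClosed K] [CharZero K]
    [Fintype κ] [DecidableEq κ] {A : Matrix ι ι K} {B : Matrix κ κ K} {b : K} {m : ℕ}
    (h : ∀ k : ℕ, (A ^ k).trace + m * b ^ k = m * (B ^ k).trace) :
    A.det * b ^ m = B.det ^ m := by
  have roots_eq : A.charpoly.roots + Multiset.replicate m b = m • B.charpoly.roots := by
    refine eq_of_forall_sum_map_pow_eq fun k => ?_
    simpa [Multiset.map_nsmul, Multiset.sum_nsmul, trace_pow_eq_sum_roots_charpoly] using h k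
  simpa [Multiset.prod_nsmul, ← Matrix.det_eq_prod_roots_charpoly] using
    congrArg Multiset.prod roots_eq

theorem det_mul_pow_eq_of_trace_pow [CharZero K] [Fintype κ] [DecidableEq κ]
    {A : Matrix ι ι K} {B : Matrix κ κ K} {b : K} {m : ℕ}
    (h : ∀ k : ℕ, (A ^ k).trace + m * b ^ k = m * (B ^ k).trace) :
    A.det * b ^ m = B.det ^ m := by
  let φ := algebraMap K (AlgebraicClosure K)
  have : CharZero (AlgebraicClosure K) := charZero_of_injective_algebraMap φ.injective
  apply φ.injective
  rw [map_mul, map_pow, map_pow, φ.map_det, φ.map_det]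
  refine det_mul_pow_eq_of_trace_pow_of_isAlgClosed fun k => ?_
  have hk := congrArg φ (h k)
  simp only [map_add, map_mul, map_natCast, map_pow, AddMonoidHom.map_trace] at hk
  simpa [Matrix.map_pow, ← map_pow] using hk

theorem det_fromBlocks_transpose_neg [Fintype κ] [DecidableEq κ] (B : Matrix ι κ K)
    (D : Matrix κ κ K) {J : Matrix ι ι K} (hJ : IsUnit J.det) :
    (fromBlocks J B (-Bᵀ) D).det = J.det * (D + Bᵀ * J⁻¹ * B).det := by
  have : Invertible J := Matrix.invertibleOfIsUnitDet _ hJ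
  rw [Matrix.det_fromBlocks₁₁, Matrix.invOf_eq_nonsing_inv, Matrix.neg_mul, Matrix.neg_mul,
    sub_neg_eq_add]

theorem transpose_schur_complement {J : Matrix ι ι K} {B : Matrix ι κ K} {D : Matrix κ κ K}
    (hJ_unit : IsUnit J.det) (hJ : Jᵀ = -J) (hD : Dᵀ = -D) :
    (D + Bᵀ * J⁻¹ * B)ᵀ = -(D + Bᵀ * J⁻¹ * B) := by
  have neg_inv : (-J)⁻¹ = -J⁻¹ := by simpa using J.inv_smul' (-1 : Kˣ) hJ_unit
  simp only [transpose_add, transpose_mul, transpose_transpose, transpose_nonsing_inv, hJ, hD,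
    Matrix.mul_assoc, neg_add, neg_inv, Matrix.neg_mul, Matrix.mul_neg]

theorem exists_det_eq_mul_det_of_transpose_eq_neg {A : Matrix ι ι K} (hA : Aᵀ = -A)
    (diag : ∀ i, A i i = 0) {i j : ι} (hij : A i j ≠ 0) :
    ∃ D : Matrix ↥(Set.range ![i, j])ᶜ ↥(Set.range ![i, j])ᶜ K,
      Dᵀ = -D ∧ A.det = A i j * A i j * D.det := by
  have apply_swap : ∀ i j, A j i = -A i j := fun i j => congrFun (congrFun hA i) j
  have f_injective : Function.Injective ![i, j] := by
    rw [Function.Injective, Fin.forall_fin_two]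
    have : i ≠ j := by rintro rfl; exact hij (diag i)
    simp [Fin.forall_fin_two, this, this.symm]
  let e : Fin 2 ⊕ ↥(Set.range ![i, j])ᶜ ≃ ι :=
    (Equiv.sumCongr (Equiv.ofInjective _ f_injective) (Equiv.refl _)).trans
      (Equiv.Set.sumCompl (Set.range ![i, j]))
  let M := A.submatrix e e
  have toBlocks₁₁_eq : M.toBlocks₁₁ = !![0, A i j; -A i j, 0] := by
    ext x y
    fin_cases x <;> fin_cases y <;> simp [toBlocks₁₁, M, e, diag, apply_swap i j]
  have toBlocks₂₁_eq : M.toBlocks₂₁ = -M.toBlocks₁₂ᵀ := by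
    ext x y
    exact apply_swap _ _
  have det_toBlocks₁₁ : M.toBlocks₁₁.det = A i j * A i j := by
    rw [toBlocks₁₁_eq, det_fin_two_of]; ring
  have isUnit_det : IsUnit M.toBlocks₁₁.det := by simp [det_toBlocks₁₁, hij]
  refine ⟨_, transpose_schur_complement (B := M.toBlocks₁₂) (D := M.toBlocks₂₂) isUnit_det ?_ ?_,
    ?_⟩
  · ext x y
    exact apply_swap _ _
  · ext x y
    exact apply_swap _ _
  · rw [← show M.det = A.det from det_submatrix_equiv_self e A, ← det_toBlocks₁₁,
      ← det_fromBlocks_transpose_neg _ _ isUnit_det, ← toBlocks₂₁_eq, fromBlocks_toBlocks]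

theorem isSquare_det_of_transpose_eq_neg [NeZero (2 : K)] {A : Matrix ι ι K} (hA : Aᵀ = -A) :
    IsSquare A.det := by
  induction hN : Fintype.card ι using Nat.strong_induction_on generalizing ι with
  | _ N ih =>
  have diag : ∀ i, A i i = 0 := fun i => by
    have apply_self : A i i = -A i i := congrFun (congrFun hA i) i
    exact (mul_eq_zero.1 (by linear_combination apply_self : 2 * A i i = 0)).resolve_left
      two_ne_zero
  by_cases hA0 : ∀ i j, A i j = 0
  · rw [show A = 0 from Matrix.ext hA0]
    cases isEmpty_or_nonempty ι <;> simp
  push Not at hA0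
  obtain ⟨i, j, hij⟩ := hA0
  obtain ⟨D, hD, det_eq⟩ := exists_det_eq_mul_det_of_transpose_eq_neg hA diag hij
  rw [det_eq]
  refine (IsSquare.mul_self _).mul (ih _ ?_ hD rfl)
  rw [← hN]
  exact Fintype.card_subtype_lt (x := i) (by simp)

end LinearAlgebra

section Representation

open Representation

variable {k G V : Type*} [Field k] [Group G] [AddCommGroup V] [Module k V]

theorem isIrreducible_iff_forall_submodule {ρ : Representation k G V} :
    ρ.IsIrreducible ↔ Nontrivial V ∧
      ∀ W : Submodule k V, (∀ g, ∀ v ∈ W, ρ g v ∈ W) → W = ⊥ ∨ W = ⊤ := by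
  have eq_iff : ∀ S T : Subrepresentation ρ, S = T ↔ S.toSubmodule = T.toSubmodule := fun S T =>
    Subrepresentation.toSubmodule_injective.eq_iff.symm
  rw [Representation.IsIrreducible, isSimpleOrder_iff, ← Submodule.nontrivial_iff k (M := V)]
  refine and_congr
    ⟨fun ⟨S, T, h⟩ => ⟨S.toSubmodule, T.toSubmodule, fun hST => h ((eq_iff S T).2 hST)⟩,
    fun _ => ⟨⊥, ⊤, fun h => bot_ne_top ((eq_iff _ _).1 h)⟩⟩ ⟨fun h W hW => ?_, fun h S => ?_⟩
  · simpa [eq_iff] using! h ⟨W, hW⟩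
  · simpa [eq_iff] using! h S.toSubmodule fun g _ hv => S.apply_mem_toSubmodule g hv

theorem exists_sum_character_eq [CharZero k] [FiniteDimensional k V] [Fintype G]
    (ρ : Representation k G V) : ∃ r : ℕ, ∑ g, ρ.character g = Nat.card G * r := by
  have card_ne_zero : (Nat.card G : k) ≠ 0 := by exact_mod_cast Nat.card_pos.ne'
  have := invertibleOfNonzero card_ne_zero
  refine ⟨Module.finrank k (invariants ρ), ?_⟩
  rw [← card_inv_mul_sum_char_eq_finrank, mul_inv_cancel_left₀ card_ne_zero]

theorem natCard_dvd_finrank_of_character_eq_zero [CharZero k] [FiniteDimensional k V] [Finite G]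
    (ρ : Representation k G V) (h : ∀ g ≠ 1, ρ.character g = 0) :
    Nat.card G ∣ Module.finrank k V := by
  have := Fintype.ofFinite G
  obtain ⟨r, hr⟩ := exists_sum_character_eq ρ
  rw [Fintype.sum_eq_single 1 h, Representation.char_one] at hr
  exact ⟨r, by exact_mod_cast hr⟩

/- A nontrivial linear character `χ` of `A` satisfies `∑ a ≠ 1, χ a = -1`, so that the multiplicity
of `χ⁻¹` in `V` is the difference of the two values of the character divided by `Nat.card A`. -/
theorem natCard_sub_one_dvd_finrank_of_sum_character_eq_zero {A V : Type*} [CommGroup A]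
    [Nontrivial A] [Fintype A] [AddCommGroup V] [Module ℂ V] [FiniteDimensional ℂ V]
    (ρ : Representation ℂ A V)
    (h_const : ∀ a ≠ 1, ∀ b ≠ 1, ρ.character a = ρ.character b)
    (h_sum : ∑ a, ρ.character a = 0) : Nat.card A - 1 ∣ Module.finrank ℂ V := by
  classical
  obtain ⟨a, ha⟩ := exists_ne (1 : A)
  obtain ⟨χ, hχ⟩ := CommGroup.exists_apply_ne_one_of_hasEnoughRootsOfUnity A ℂ ha
  let twist : Representation ℂ A V :=
    { toFun b := (χ b : ℂ) • ρ b
      map_one' := by simp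
      map_mul' b c := by rw [map_mul, map_mul, Units.val_mul, smul_mul_smul_comm] }
  have sum_χ : ∑ b, (χ b : ℂ) = 0 := sum_hom_units_eq_zero ((Units.coeHom ℂ).comp χ) fun h =>
    hχ (Units.ext (DFunLike.congr_fun h a))
  have sum_twist : ∑ b, twist.character b = ρ.character 1 - ρ.character a := by
    have term_eq (b : A) : twist.character b
        = χ b * ρ.character a + if b = 1 then ρ.character 1 - ρ.character a else 0 := by
      have twist_eq : twist.character b = χ b * ρ.character b := map_smul _ _ _
      by_cases hb : b = 1
      · simp [hb]
      · rw [twist_eq, h_const b hb a ha, if_neg hb, add_zero]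
    simp only [term_eq, Finset.sum_add_distrib, ← Finset.sum_mul, sum_χ, zero_mul,
      Finset.sum_ite_eq', Finset.mem_univ, if_true, zero_add]
  obtain ⟨r, hr⟩ := exists_sum_character_eq twist
  rw [sum_eq_add_card_sub_one_mul 1 fun b hb => h_const b hb a ha] at h_sum
  rw [sum_twist] at hr
  rw [Representation.char_one] at h_sum hr
  have card_ne_zero : (Nat.card A : ℂ) ≠ 0 := by exact_mod_cast Nat.card_pos.ne'
  have finrank_eq : (Module.finrank ℂ V : ℂ) = (Nat.card A - 1 : ℕ) * r := by
    rw [Nat.cast_pred Nat.card_pos]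
    apply mul_left_cancel₀ card_ne_zero
    linear_combination h_sum + (Nat.card A - 1) * hr
  exact ⟨r, by exact_mod_cast finrank_eq⟩

theorem eq_one_or_sum_eq_zero_of_normal_range (ρ : Representation k G V) [ρ.IsIrreducible]
    {N : Type*} [Group N] [Fintype N] (f : N →* G) [f.range.Normal] :
    (∀ s, ρ (f s) = 1) ∨ ∑ s, ρ (f s) = 0 := by
  rcases (isIrreducible_iff_forall_submodule.1 ‹_›).2 (invariants (ρ.comp f.range.subtype))
    (le_comap_invariants ρ f.range) with h | h
  · right
    ext v
    have sum_mem : (∑ s, ρ (f s)) v ∈ invariants (ρ.comp f.range.subtype) := by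
      rintro ⟨_, s, rfl⟩
      rw [LinearMap.sum_apply, map_sum]
      refine Fintype.sum_equiv (Equiv.mulLeft s) _ _ fun t => ?_
      simp
    simpa [h] using sum_mem
  · left
    intro s
    ext v
    exact (h ▸ Submodule.mem_top : v ∈ invariants (ρ.comp f.range.subtype)) ⟨f s, s, rfl⟩

variable [IsAlgClosed k] [FiniteDimensional k V] (ρ : Representation k G V) [ρ.IsIrreducible]

theorem exists_eq_smul_one_of_commute {f : Module.End k V} (hf : ∀ g, Commute f (ρ g)) :
    ∃ c : k, f = c • 1 := by
  obtain ⟨c, hc⟩ := IsIrreducible.algebraMap_intertwiningMap_bijective_of_isAlgClosed.2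
    (⟨f, fun g => hf g⟩ : IntertwiningMap ρ ρ)
  exact ⟨c, (congrArg IntertwiningMap.toLinearMap hc).symm⟩

theorem finrank_eq_one_of_forall_commute (h : ∀ g₁ g₂, Commute (ρ g₁) (ρ g₂)) :
    Module.finrank k V = 1 := by
  obtain ⟨_, forall_submodule⟩ := (isIrreducible_iff_forall_submodule (ρ := ρ)).1 ‹_›
  obtain ⟨v, hv⟩ := exists_ne (0 : V)
  refine finrank_eq_one_iff'.2 ⟨v, hv, fun w => ?_⟩
  have span_invariant : ∀ g, ∀ w ∈ Submodule.span k {v}, ρ g w ∈ Submodule.span k {v} := by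
    intro g w hw
    obtain ⟨c, hc⟩ := exists_eq_smul_one_of_commute ρ (h g)
    rw [hc]
    exact Submodule.smul_mem _ c hw
  rcases forall_submodule _ span_invariant with h_bot | h_top
  · exact absurd (Submodule.span_singleton_eq_bot.1 h_bot) hv
  · exact Submodule.mem_span_singleton.1 (h_top ▸ Submodule.mem_top)

theorem sum_character_mul_character_inv [CharZero k] [Fintype G] :
    ∑ g, ρ.character g * ρ.character g⁻¹ = Nat.card G := by
  have card_ne_zero : (Nat.card G : k) ≠ 0 := by exact_mod_cast Nat.card_pos.ne'
  have := invertibleOfNonzero card_ne_zero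
  have h := char_orthonormal ρ ρ
  rwa [if_pos ⟨.refl ρ⟩, inv_mul_eq_one₀ card_ne_zero, eq_comm] at h

theorem sum_conj_eq_smul_one [CharZero k] [Fintype G] (f : Module.End k V) :
    ∑ g, ρ g * f * ρ g⁻¹
      = (Nat.card G * LinearMap.trace k V f / Module.finrank k V) • 1 := by
  have commute_sum : ∀ h, Commute (∑ g, ρ g * f * ρ g⁻¹) (ρ h) := by
    intro h
    rw [Commute, SemiconjBy, Finset.mul_sum, Finset.sum_mul]
    refine Fintype.sum_equiv (Equiv.mulLeft h⁻¹) _ _ fun g => ?_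
    simp [mul_assoc, ← map_mul, ← mul_assoc (ρ h)]
  obtain ⟨c, hc⟩ := exists_eq_smul_one_of_commute ρ commute_sum
  have finrank_ne_zero : (Module.finrank k V : k) ≠ 0 := by
    have := (isIrreducible_iff_forall_submodule (ρ := ρ)).1 ‹_› |>.1
    exact_mod_cast Module.finrank_pos.ne'
  have trace_sum := congrArg (LinearMap.trace k V) hc
  simp only [map_sum, map_smul, LinearMap.trace_one, smul_eq_mul] at trace_sum
  have trace_conj : ∀ g, LinearMap.trace k V (ρ g * f * ρ g⁻¹) = LinearMap.trace k V f := by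
    intro g
    rw [LinearMap.trace_mul_comm, ← mul_assoc, ← map_mul, inv_mul_cancel, map_one, one_mul]
  simp only [trace_conj, Finset.sum_const, Finset.card_univ, nsmul_eq_mul] at trace_sum
  rw [hc, Nat.card_eq_fintype_card, trace_sum, mul_div_cancel_right₀ _ finrank_ne_zero]

theorem apply_eq_one_of_mem_center_of_odd_pow_eq_one [CharZero k] {g : G}
    (hg : g ∈ Subgroup.center G) {N : ℕ} (hN : Odd N) (g_pow : g ^ N = 1)
    (rational : ∃ r : ℚ, ρ.character g = r) : ρ g = 1 := by
  have := (isIrreducible_iff_forall_submodule (ρ := ρ)).1 ‹_› |>.1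
  have finrank_ne_zero : (Module.finrank k V : k) ≠ 0 := by exact_mod_cast Module.finrank_pos.ne'
  obtain ⟨c, hc⟩ := exists_eq_smul_one_of_commute ρ (f := ρ g) fun h => by
    rw [Commute, SemiconjBy, ← map_mul, ← map_mul, Subgroup.mem_center_iff.1 hg h]
  obtain ⟨r, hr⟩ := rational
  rw [Representation.character, hc, map_smul, LinearMap.trace_one, smul_eq_mul,
    ← eq_div_iff finrank_ne_zero] at hr
  have c_rational : c = (r / Module.finrank k V : ℚ) := by rw [hr]; push_cast; rfl
  have c_pow : c ^ N = 1 := by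
    have := congrArg (LinearMap.trace k V) (map_pow ρ g N)
    rw [g_pow, map_one, hc, smul_pow, one_pow, map_smul, LinearMap.trace_one, smul_eq_mul] at this
    exact mul_right_cancel₀ finrank_ne_zero (by rw [← this, one_mul])
  rw [c_rational] at c_pow
  have : (r / Module.finrank k V : ℚ) = 1 :=
    hN.strictMono_pow.injective (by simpa only [one_pow] using mod_cast c_pow)
  rw [hc, c_rational, this, Rat.cast_one, one_smul]

end Representation

section MatrixRepresentation

variable {G : Type} [Group G] {n : ℕ} (ρ : G →* GL (Fin n) ℂ)

/-- The linear representation on column vectors given by a matrix representation. -/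
def toRep : Representation ℂ G (Fin n → ℂ) :=
  (toLinAlgEquiv' (R := ℂ) (n := Fin n) : _ →* _).comp ((Units.coeHom _).comp ρ)

theorem toRep_apply (g : G) : toRep ρ g = toLin' (ρ g : Matrix (Fin n) (Fin n) ℂ) := rfl

theorem character_toRep : (toRep ρ).character = charOf ρ := by
  ext g
  rw [Representation.character, toRep_apply, trace_toLin'_eq, charOf]

theorem charOf_one : charOf ρ 1 = n := by
  simp [← character_toRep]

theorem charOf_conj (g h : G) : charOf ρ (h * g * h⁻¹) = charOf ρ g := by
  rw [← character_toRep, Representation.char_conj]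

theorem isIrredRep_iff_isIrreducible : IsIrredRep ρ ↔ (toRep ρ).IsIrreducible := by
  rw [isIrreducible_iff_forall_submodule, IsIrredRep, Fin.pos_iff_nonempty]
  refine and_congr_left fun _ => ⟨fun _ => inferInstance, fun h => ?_⟩
  by_contra h_empty
  rw [not_nonempty_iff] at h_empty
  exact not_subsingleton (Fin n → ℂ) inferInstance

theorem conj_trace_eq_trace_pow {ι : Type*} [Fintype ι] [DecidableEq ι] {A : Matrix ι ι ℂ} {N : ℕ}
    (hA : A ^ (N + 1) = 1) : starRingEnd ℂ A.trace = (A ^ N).trace := by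
  have pow_root : ∀ x ∈ A.charpoly.roots, x ^ (N + 1) = 1 := by
    intro x hx
    have h := roots_charpoly_aeval A (Polynomial.X ^ (N + 1))
    rw [map_pow, Polynomial.aeval_X, hA, charpoly_one, Polynomial.roots_pow] at h
    have mem_roots : x ^ (N + 1) ∈ Fintype.card ι • (Polynomial.X - 1 : Polynomial ℂ).roots := by
      rw [h, Multiset.mem_map]
      exact ⟨x, hx, by simp⟩
    rw [← Polynomial.C_1, Polynomial.roots_X_sub_C] at mem_roots
    exact Multiset.mem_singleton.1 (Multiset.mem_of_mem_nsmul mem_roots)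
  rw [trace_eq_sum_roots_charpoly, trace_pow_eq_sum_roots_charpoly, map_multiset_sum]
  refine congrArg _ (Multiset.map_congr rfl fun x hx => ?_)
  rw [← Complex.inv_eq_conj (Complex.norm_eq_one_of_pow_eq_one (pow_root x hx) N.succ_ne_zero)]
  exact inv_eq_of_mul_eq_one_left (by rw [← pow_succ, pow_root x hx])

theorem charOf_inv [Finite G] (g : G) : charOf ρ g⁻¹ = starRingEnd ℂ (charOf ρ g) := by
  obtain ⟨N, hN⟩ := Nat.exists_eq_add_one.2 (orderOf_pos g)
  have pow_succ_eq_one : g ^ (N + 1) = 1 := hN ▸ pow_orderOf_eq_one g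
  have pow_eq_inv : g ^ N = g⁻¹ := eq_inv_of_mul_eq_one_left (by rw [← pow_succ, pow_succ_eq_one])
  have matrix_pow : (ρ g : Matrix (Fin n) (Fin n) ℂ) ^ (N + 1) = 1 := by
    rw [← Units.val_pow_eq_pow_val, ← map_pow, pow_succ_eq_one, map_one, Units.val_one]
  rw [charOf, charOf, conj_trace_eq_trace_pow matrix_pow, ← Units.val_pow_eq_pow_val, ← map_pow,
    pow_eq_inv]

theorem sum_sq_of_charOf_eq [Fintype G] {ρ : G →* GL (Fin n) ℂ} (hρ : IsIrredRep ρ) {ψ : G → ℚ}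
    (hψ : ∀ g, charOf ρ g = ψ g) : ∑ g, ψ g ^ 2 = Nat.card G := by
  have := (isIrredRep_iff_isIrreducible ρ).1 hρ
  have sum_eq := sum_character_mul_character_inv (toRep ρ)
  simp only [character_toRep, charOf_inv] at sum_eq
  simp only [hψ, map_ratCast, ← sq] at sum_eq
  exact_mod_cast sum_eq

theorem FSind_eq_one_iff [Fintype G] {χ : G → ℂ} : FSind χ = 1 ↔ ∑ g, χ (g * g) = Nat.card G := by
  rw [FSind, finsum_eq_sum_of_fintype, inv_mul_eq_one₀ (by exact_mod_cast Nat.card_pos.ne'),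
    eq_comm]

theorem sum_mul_mul_inv_eq_smul_one [Fintype G] {ρ : G →* GL (Fin n) ℂ} (hρ : IsIrredRep ρ)
    (X : Matrix (Fin n) (Fin n) ℂ) :
    ∑ g, (ρ g : Matrix (Fin n) (Fin n) ℂ) * X * (ρ g⁻¹ : Matrix (Fin n) (Fin n) ℂ)
      = (Nat.card G * X.trace / n : ℂ) • 1 := by
  have := (isIrredRep_iff_isIrreducible ρ).1 hρ
  have h := sum_conj_eq_smul_one (toRep ρ) (toLin' X)
  simp only [toRep_apply, ← toLin'_mul, ← map_sum, trace_toLin'_eq, Module.finrank_fin_fun,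
    Module.End.mul_eq_comp, ← toLin'_one, ← map_smul, Module.End.one_eq_id] at h
  exact toLin'.injective h

/-- A symmetric nondegenerate bilinear form, given by its Gram matrix, which is invariant under a
matrix representation. -/
structure IsInvariantForm {R : Type*} [CommRing R] (ρ : G →* GL (Fin n) R)
    (H : Matrix (Fin n) (Fin n) R) : Prop where
  isUnit_det : IsUnit H.det
  transpose_eq : Hᵀ = H
  transpose_mul_mul : ∀ g, (ρ g : Matrix (Fin n) (Fin n) R)ᵀ * H * ρ g = H

theorem IsInvariantForm.transpose_apply_eq {R : Type*} [CommRing R] {ρ : G →* GL (Fin n) R}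
    {H : Matrix (Fin n) (Fin n) R} (hH : IsInvariantForm ρ H) (g : G) :
    (ρ g : Matrix (Fin n) (Fin n) R)ᵀ = H * ρ g⁻¹ * H⁻¹ := by
  rw [← hH.transpose_mul_mul g, Matrix.mul_assoc _ (ρ g).val, ← Units.val_mul, ← map_mul,
    mul_inv_cancel, map_one, Units.val_one, mul_one, hH.transpose_mul_mul g, Matrix.mul_assoc,
    Matrix.mul_nonsing_inv _ hH.isUnit_det, mul_one]

theorem sum_charOf_mul_self [Fintype G] {ρ : G →* GL (Fin n) ℂ} (hρ : IsIrredRep ρ)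
    {H : Matrix (Fin n) (Fin n) ℂ} (hH : IsInvariantForm ρ H) :
    ∑ g, charOf ρ (g * g) = Nat.card G := by
  have n_ne_zero : (n : ℂ) ≠ 0 := by exact_mod_cast hρ.1.ne'
  have inv_symm : (H⁻¹)ᵀ = H⁻¹ := by rw [transpose_nonsing_inv, hH.transpose_eq]
  have sum_mul_transpose : ∀ Y : Matrix (Fin n) (Fin n) ℂ,
      ∑ g, (ρ g : Matrix (Fin n) (Fin n) ℂ) * Y * (ρ g : Matrix (Fin n) (Fin n) ℂ)ᵀ
        = (Nat.card G * (Y * H).trace / n : ℂ) • H⁻¹ := fun Y => by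
    simp only [hH.transpose_apply_eq, ← Matrix.mul_assoc, ← Finset.sum_mul]
    simp only [Matrix.mul_assoc _ Y H, sum_mul_mul_inv_eq_smul_one hρ, smul_mul, one_mul]
  calc ∑ g, charOf ρ (g * g)
      = ∑ i, ∑ j, (∑ g, (ρ g : Matrix (Fin n) (Fin n) ℂ) * single j i 1 *
          (ρ g : Matrix (Fin n) (Fin n) ℂ)ᵀ : Matrix (Fin n) (Fin n) ℂ) i j := by
        simp only [charOf, map_mul, Units.val_mul, Matrix.trace, diag_apply, mul_apply,
          Matrix.sum_apply]
        rw [Finset.sum_comm]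
        refine Finset.sum_congr rfl fun i _ => ?_
        rw [Finset.sum_comm]
        refine Finset.sum_congr rfl fun j _ => Finset.sum_congr rfl fun g _ => ?_
        simp [single_apply, ite_and]
    _ = ∑ i, ∑ j, Nat.card G / n * (H i j * H⁻¹ j i) := by
        refine Finset.sum_congr rfl fun i _ => Finset.sum_congr rfl fun j _ => ?_
        rw [sum_mul_transpose, trace_single_mul, Matrix.smul_apply, smul_eq_mul, ← inv_symm,
          transpose_apply, inv_symm, one_smul]
        ring
    _ = Nat.card G / n * (H * H⁻¹).trace := by
        simp only [Matrix.trace, diag_apply, mul_apply, Finset.mul_sum]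
    _ = Nat.card G := by
        rw [mul_nonsing_inv _ hH.isUnit_det, trace_one, Fintype.card_fin,
          div_mul_cancel₀ _ n_ne_zero]

theorem FSind_eq_one [Finite G] {ρ : G →* GL (Fin n) ℂ} (hρ : IsIrredRep ρ)
    {H : Matrix (Fin n) (Fin n) ℂ} (hH : IsInvariantForm ρ H) : FSind (charOf ρ) = 1 := by
  have := Fintype.ofFinite G
  exact FSind_eq_one_iff.2 (sum_charOf_mul_self hρ hH)

end MatrixRepresentation

section Discriminant

variable {A : Type*} [CommGroup A]

theorem inv_ne_self_of_odd_card (hA : Odd (Nat.card A)) {a : A} (ha : a ≠ 1) : a⁻¹ ≠ a := by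
  intro h
  have sq_eq_one : a ^ 2 = 1 := by rw [sq, ← eq_inv_iff_mul_eq_one, h]
  have coprime : (Nat.card A).Coprime 2 := hA.coprime_two_right
  exact ha ((Nat.Coprime.pow_left_bijective coprime).1 (by simpa using sq_eq_one))

theorem exists_forall_inv_eq_neg_and_odd [Finite A] (hA : Odd (Nat.card A)) :
    ∃ c : A → ℤ, (∀ a, c a⁻¹ = -c a) ∧ ∀ a ≠ 1, Odd (c a) := by
  obtain ⟨N, ⟨e⟩⟩ := Finite.exists_equiv_fin A
  refine ⟨fun a => Int.sign ((e a⁻¹ : ℤ) - e a), fun a => ?_, fun a ha => ?_⟩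
  · simp only [inv_inv]
    rw [← Int.sign_neg, neg_sub]
  · have sub_ne_zero : (e a⁻¹ : ℤ) - e a ≠ 0 := by
      have := e.injective.ne (inv_ne_self_of_odd_card hA ha)
      omega
    rcases Int.sign_trichotomy ((e a⁻¹ : ℤ) - e a) with h | h | h
    · simp [h]
    · exact absurd (Int.sign_eq_zero_iff_zero.1 h) sub_ne_zero
    · simp [h]

theorem sum_eq_zero_of_forall_inv_eq_neg [Fintype A] {c : A → ℤ} (hc : ∀ a, c a⁻¹ = -c a) :
    ∑ a, c a = 0 := by
  have h : ∑ a, c a⁻¹ = ∑ a, c a := Fintype.sum_equiv (Equiv.inv A) _ _ fun _ => rfl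
  simp only [hc, Finset.sum_neg_distrib] at h
  omega

theorem isSquare_det_add_of_one {K ι : Type*} [Field K] [NeZero (2 : K)] [Fintype ι]
    [DecidableEq ι] {C : Matrix ι ι K} (hC : Cᵀ = -C) (hsum : ∀ j, ∑ i, C i j = 0)
    (hcard : (Fintype.card ι : K) ≠ 0) : IsSquare (C + of fun _ _ => 1).det := by
  let u : Matrix ι Unit K := of fun _ _ => 1
  let n : K := Fintype.card ι
  have transpose_mul_C : uᵀ * C = 0 := by
    ext i j
    simpa [u, mul_apply] using hsum j
  have transpose_mul_u : uᵀ * u = n • 1 := by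
    ext i j
    simp [u, n, mul_apply]
  have mul_transpose : u * uᵀ = of fun _ _ => 1 := by
    ext i j
    simp [u, mul_apply]
  have bordered : fromBlocks 1 0 (n⁻¹ • uᵀ) 1 * fromBlocks C u (-uᵀ) 0 * fromBlocks 1 0 uᵀ 1
      = fromBlocks (C + of fun _ _ => 1) u 0 1 := by
    rw [fromBlocks_multiply, fromBlocks_multiply]
    congr 1 <;>
      simp [← mul_transpose, transpose_mul_C, transpose_mul_u, smul_smul, inv_mul_cancel₀ hcard, n]
  have det_eq := congrArg det bordered
  rw [det_mul, det_mul, det_fromBlocks_zero₁₂, det_fromBlocks_zero₁₂,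
    det_fromBlocks_zero₂₁] at det_eq
  simp only [det_one, one_mul, mul_one] at det_eq
  rw [← det_eq]
  refine isSquare_det_of_transpose_eq_neg ?_
  rw [fromBlocks_transpose, fromBlocks_neg, hC]
  simp

theorem det_ne_zero_of_odd_diag_of_even {ι : Type*} [Fintype ι] [DecidableEq ι] {D : Matrix ι ι ℤ}
    (hdiag : ∀ i, Odd (D i i)) (hoff : ∀ i j, i ≠ j → Even (D i j)) : D.det ≠ 0 := by
  intro h
  have map_eq_one : (Int.castRingHom (ZMod 2)).mapMatrix D = 1 := by
    ext i j
    rcases eq_or_ne i j with rfl | hij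
    · simpa using (ZMod.intCast_eq_one_iff_odd).2 (hdiag i)
    · simpa [hij] using (ZMod.intCast_eq_zero_iff_even).2 (hoff i j hij)
  have det_cast := RingHom.map_det (Int.castRingHom (ZMod 2)) D
  rw [h, map_eq_one, det_one, map_zero] at det_cast
  exact zero_ne_one det_cast

/-- The regular representation of a commutative group by permutation matrices. -/
def regularMatrix (K : Type*) [CommRing K] [Fintype A] [DecidableEq A] : A →* Matrix A A K where
  toFun a := of fun x y => if x = a * y then 1 else 0
  map_one' := by
    ext x y
    simp [one_apply]
  map_mul' a b := by
    ext x y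
    simp [mul_apply, mul_assoc]

section Fintype

variable {K : Type*} [Field K] [Fintype A]

theorem trace_regularMatrix [DecidableEq A] (a : A) :
    (regularMatrix K a).trace = if a = 1 then (Nat.card A : K) else 0 := by
  split_ifs with h
  · simp [h]
  · simp [Matrix.trace, regularMatrix, h]

theorem sum_smul_regularMatrix [DecidableEq A] (c : A → K) :
    ∑ a, c a • regularMatrix K a = of fun x y => c (x * y⁻¹) := by
  ext x y
  simp [Matrix.sum_apply, regularMatrix, ← mul_inv_eq_iff_eq_mul]

variable [CharZero K] {ι : Type*} [Fintype ι] [DecidableEq ι] {f : A →* Matrix ι ι K} {m : ℕ}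

theorem sum_eq_zero_of_sum_trace_eq_zero (h : ∑ a, (f a).trace = 0) : ∑ a, f a = 0 := by
  have card_ne_zero : (Nat.card A : K) ≠ 0 := by exact_mod_cast Nat.card_pos.ne'
  let S := toLin' ((Nat.card A : K)⁻¹ • ∑ a, f a)
  have mul_sum_eq : ∀ a, f a * ∑ b, f b = ∑ b, f b := by
    intro a
    rw [Finset.mul_sum]
    exact Fintype.sum_equiv (Equiv.mulLeft a) _ _ fun b => by simp
  have isIdempotentElem : IsIdempotentElem S := by
    rw [IsIdempotentElem, Module.End.mul_eq_comp, ← toLin'_mul, smul_mul_smul_comm, Finset.sum_mul]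
    simp only [mul_sum_eq, Finset.sum_const, Finset.card_univ, ← Nat.card_eq_fintype_card]
    rw [← Nat.cast_smul_eq_nsmul K, smul_smul, mul_assoc, inv_mul_cancel₀ card_ne_zero, mul_one]
  have S_eq_zero : S = 0 := LinearMap.IsIdempotentElem.eq_zero_of_trace_eq_zero isIdempotentElem
    (by simp [S, trace_toLin'_eq, h])
  rw [LinearEquiv.map_eq_zero_iff] at S_eq_zero
  exact (smul_eq_zero.1 S_eq_zero).resolve_left (inv_ne_zero card_ne_zero)

/- The hypotheses say that `f` together with `m` trivial characters has the character of `m` copies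
of the regular representation, so the two sides are determinants of the same group ring element. -/
theorem det_sum_smul_mul_pow [DecidableEq A] (h_ne : ∀ a ≠ 1, (f a).trace = -m)
    (h_one : (f 1).trace = m * (Nat.card A - 1)) (c : A → K) :
    (∑ a, c a • f a).det * (∑ a, c a) ^ m = (of fun x y : A => c (x * y⁻¹)).det ^ m := by
  let F := MonoidAlgebra.lift K (Matrix ι ι K) A f
  let R := MonoidAlgebra.lift K (Matrix A A K) A (regularMatrix K)
  let ε := MonoidAlgebra.lift K K A 1
  have trace_eq : ∀ x, (F x).trace + m * ε x = m * (R x).trace := by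
    intro x
    induction x using MonoidAlgebra.induction_linear with
    | zero => simp
    | add x y hx hy => simp only [map_add, trace_add]; linear_combination hx + hy
    | single a r =>
      simp only [F, R, ε, MonoidAlgebra.lift_single, trace_smul, trace_regularMatrix, smul_eq_mul,
        MonoidHom.one_apply]
      rcases eq_or_ne a 1 with rfl | ha
      · rw [h_one, if_pos rfl]; ring
      · rw [h_ne a ha, if_neg ha]; ring
  let x : MonoidAlgebra K A := ∑ a, MonoidAlgebra.single a (c a)
  have det_eq : (F x).det * ε x ^ m = (R x).det ^ m :=
    det_mul_pow_eq_of_trace_pow fun k => by simpa only [map_pow] using trace_eq (x ^ k)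
  have F_x : F x = ∑ a, c a • f a := by simp [F, x]
  have R_x : R x = ∑ a, c a • regularMatrix K a := by simp [R, x]
  have ε_x : ε x = ∑ a, c a := by simp [ε, x]
  rwa [F_x, R_x, ε_x, sum_smul_regularMatrix] at det_eq

theorem isSquare_det_of_forall_inv_eq_neg [DecidableEq A] {c : A → ℤ} (hc : ∀ a, c a⁻¹ = -c a) :
    IsSquare (of fun x y : A => (c (x * y⁻¹) + 1 : K)).det := by
  have sum_eq_zero : ∀ y, ∑ x, (c (x * y⁻¹) : K) = 0 := fun y => by
    rw [← Int.cast_zero, ← sum_eq_zero_of_forall_inv_eq_neg hc, Int.cast_sum]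
    exact Fintype.sum_equiv (Equiv.mulRight y⁻¹) _ _ fun x => by simp
  refine isSquare_det_add_of_one (C := of fun x y : A => (c (x * y⁻¹) : K)) ?_ sum_eq_zero
    (by exact_mod_cast Fintype.card_ne_zero)
  ext x y
  simpa using congrArg (Int.cast : ℤ → K) (hc (x * y⁻¹))

theorem det_ne_zero_of_forall_odd [DecidableEq A] {c : A → ℤ} (h_one : c 1 = 0)
    (h_odd : ∀ a ≠ 1, Odd (c a)) :
    (of fun x y : A => (c (x * y⁻¹) + 1 : K)).det ≠ 0 := by
  let D : Matrix A A ℤ := of fun x y => c (x * y⁻¹) + 1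
  have det_ne_zero : D.det ≠ 0 := by
    refine det_ne_zero_of_odd_diag_of_even (fun x => ?_) fun x y hxy => ?_
    · simp [D, h_one]
    · exact (h_odd _ (mul_inv_eq_one.not.2 hxy)).add_one
  have det_cast := RingHom.map_det (Int.castRingHom K) D
  rw [eq_intCast] at det_cast
  convert (Int.cast_ne_zero (α := K)).2 det_ne_zero
  rw [det_cast]
  congr 1
  ext x y
  simp [D]

theorem isSquare_det_mul_det_sum {c : A → ℤ} (hc : ∀ a, c a⁻¹ = -c a) {H : Matrix ι ι K}
    (hH : Hᵀ = H) (invariant : ∀ a, (f a)ᵀ * H * f a = H) :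
    IsSquare (H.det * (∑ a, (c a : K) • f a).det) := by
  have transpose_mul_eq : ∀ a, (f a)ᵀ * H = H * f a⁻¹ := fun a => by
    conv_rhs => rw [← invariant a]
    rw [mul_assoc _ (f a), ← map_mul, mul_inv_cancel, map_one, mul_one]
  rw [← det_mul]
  refine isSquare_det_of_transpose_eq_neg ?_
  simp only [transpose_mul_eq, transpose_mul, transpose_sum, transpose_smul, hH, smul_mul,
    Finset.mul_sum, ← Finset.sum_neg_distrib]
  exact Fintype.sum_equiv (Equiv.inv A) _ _ fun a => by simp [hc]

end Fintype

theorem isSquare_card_mul_det {K ι : Type*} [Field K] [CharZero K] [Finite A] [Fintype ι]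
    [DecidableEq ι] {f : A →* Matrix ι ι K} {m : ℕ} (hA : Odd (Nat.card A)) (hm : Odd m)
    (h_ne : ∀ a ≠ 1, (f a).trace = -m) (h_one : (f 1).trace = m * (Nat.card A - 1))
    {H : Matrix ι ι K} (hH : Hᵀ = H) (invariant : ∀ a, (f a)ᵀ * H * f a = H) :
    IsSquare (Nat.card A * H.det) := by
  classical
  have := Fintype.ofFinite A
  obtain ⟨c, c_inv, c_odd⟩ := exists_forall_inv_eq_neg_and_odd hA
  have c_one : c 1 = 0 := by have := c_inv 1; rw [inv_one] at this; omega
  have sum_c : ∑ a, (c a + 1 : K) = Nat.card A := by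
    rw [Finset.sum_add_distrib, ← Int.cast_sum, sum_eq_zero_of_forall_inv_eq_neg c_inv]
    simp
  have sum_f : ∑ a, f a = 0 := by
    refine sum_eq_zero_of_sum_trace_eq_zero ?_
    rw [sum_eq_add_card_sub_one_mul 1 h_ne, h_one]
    ring
  have det_eq := det_sum_smul_mul_pow h_ne h_one fun a => (c a + 1 : K)
  simp only [add_smul, one_smul, Finset.sum_add_distrib, sum_f, add_zero, sum_c] at det_eq
  obtain ⟨s, hs⟩ := isSquare_det_mul_det_sum c_inv hH invariant
  obtain ⟨d, hd⟩ := isSquare_det_of_forall_inv_eq_neg (K := K) c_inv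
  have d_ne_zero : d ≠ 0 := by
    rintro rfl
    exact det_ne_zero_of_forall_odd (K := K) c_one c_odd (by rw [hd, zero_mul])
  obtain ⟨k, rfl⟩ := hm
  rw [hd] at det_eq
  refine ⟨s * Nat.card A ^ (k + 1) / d ^ (2 * k + 1), ?_⟩
  field_simp
  linear_combination (-H.det * Nat.card A) * det_eq + Nat.card A ^ (2 * k + 2) * hs

end Discriminant

section Torus

variable {F : Type*} [Field F] [StarRing F]

/-- The norm from the units of `F` to the units of the fixed field of `star`. -/
def normHom : Fˣ →* Fˣ := MonoidHom.id Fˣ * (starMulAut : MulAut Fˣ).toMonoidHom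

theorem coe_normHom (t : Fˣ) : (normHom t : F) = t * star (t : F) := rfl

theorem star_normHom (t : Fˣ) : star (normHom t : F) = normHom t := by
  rw [coe_normHom, star_mul, star_star]

/-- The factor by which an element of the torus of `SU₃` scales the off-diagonal coordinate of
the unipotent radical. -/
def twistHom : Fˣ →* Fˣ := (starMulAut : MulAut Fˣ).toMonoidHom ^ 2 * (MonoidHom.id Fˣ)⁻¹

theorem coe_twistHom (t : Fˣ) : (twistHom t : F) = star (t : F) ^ 2 * (t : F)⁻¹ := by
  simp [twistHom]

theorem twistHom_mul_star_twistHom (t : Fˣ) :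
    (twistHom t : F) * star (twistHom t : F) = normHom t := by
  rw [coe_twistHom, coe_normHom, star_mul', star_pow, star_star, star_inv₀]
  field_simp

theorem normHom_eq_one_of_twistHom_eq_one {t : Fˣ} (ht : twistHom t = 1) : normHom t = 1 := by
  ext
  rw [← twistHom_mul_star_twistHom, ht]
  simp

theorem pow_three_eq_one_of_twistHom_eq_one {t : Fˣ} (ht : twistHom t = 1) : t ^ 3 = 1 := by
  have star_sq : star (t : F) ^ 2 = t := by
    rw [← mul_inv_eq_one₀ t.ne_zero, ← coe_twistHom, ht, Units.val_one]
  have norm_eq_one : (t : F) * star (t : F) = 1 := by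
    rw [← coe_normHom, normHom_eq_one_of_twistHom_eq_one ht, Units.val_one]
  ext
  push_cast
  linear_combination (-(t : F) ^ 2) * star_sq + (t * star (t : F) + 1) * norm_eq_one

theorem natCard_ker_twistHom_le [Finite F] : Nat.card (twistHom : Fˣ →* Fˣ).ker ≤ 3 :=
  (Nat.card_mono (Set.toFinite _) fun _ => pow_three_eq_one_of_twistHom_eq_one).trans
    (card_rootsOfUnity F 3)

end Torus

section FrobeniusStar

/-- The involution `star` on the field `F` of `q ^ 2` elements, with `q` odd, is `x ↦ x ^ q`. -/
class FrobeniusStar (q : outParam ℕ) (F : Type*) [Field F] [Fintype F] [StarRing F] : Prop where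
  odd : Odd q
  card_eq : Fintype.card F = q ^ 2
  star_eq_pow : ∀ x : F, star x = x ^ q

instance {A : Type*} [AddCommGroup A] [StarAddMonoid A] [Finite A] : Fintype (skewAdjoint A) :=
  .ofFinite _

namespace FrobeniusStar

variable (q : ℕ) (F : Type*) [Field F] [Fintype F] [StarRing F]

theorem three_le [FrobeniusStar q F] : 3 ≤ q := by
  have one_lt_card := Fintype.one_lt_card (α := F)
  rw [card_eq] at one_lt_card
  obtain ⟨m, hm⟩ := odd F (q := q)
  by_contra! h
  obtain rfl : q = 1 := by omega
  simp at one_lt_card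

theorem cast_ne_zero [FrobeniusStar q F] : (q : ℚ) ≠ 0 :=
  Nat.cast_ne_zero.2 (by have := three_le q F; omega)

theorem ringChar_ne_two [FrobeniusStar q F] : ringChar F ≠ 2 := by
  rw [Ne, FiniteField.even_card_iff_char_two, card_eq, ← Nat.even_iff, Nat.not_even_iff_odd]
  exact (odd F).pow

instance neZero_two [FrobeniusStar q F] : NeZero (2 : F) := ⟨Ring.two_ne_zero (ringChar_ne_two q F)⟩

theorem natCard_units [FrobeniusStar q F] : Nat.card Fˣ = (q + 1) * (q - 1) := by
  rw [Nat.card_units, Nat.card_eq_fintype_card, card_eq, ← one_pow 2, Nat.sq_sub_sq, one_pow]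

theorem half_mul_two [FrobeniusStar q F] : (q + 1) / 2 * 2 = q + 1 := by
  obtain ⟨m, hm⟩ := odd F (q := q)
  omega

theorem neg_one_ne_one [FrobeniusStar q F] : (-1 : Fˣ) ≠ 1 := fun h =>
  Ring.neg_one_ne_one_of_char_ne_two (ringChar_ne_two q F) (congrArg Units.val h)

variable {F}

theorem normHom_eq_pow [FrobeniusStar q F] (t : Fˣ) : normHom t = t ^ (q + 1) := by
  ext
  rw [coe_normHom, star_eq_pow, Units.val_pow_eq_pow_val, pow_succ']

variable (F) in
theorem natCard_ker_normHom [FrobeniusStar q F] :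
    Nat.card (normHom : Fˣ →* Fˣ).ker = q + 1 := by
  have h : (normHom : Fˣ →* Fˣ) = powMonoidHom (q + 1) := MonoidHom.ext (normHom_eq_pow q)
  rw [h, IsCyclic.card_powMonoidHom_ker, natCard_units q, Nat.gcd_mul_right_left]

theorem pow_sub_one_eq_one_iff [FrobeniusStar q F] {x : Fˣ} :
    x ^ (q - 1) = 1 ↔ star (x : F) = x := by
  rw [← mul_left_inj x, one_mul, ← pow_succ, Nat.sub_add_cancel (by have := three_le q F; omega),
    star_eq_pow, Units.ext_iff, Units.val_pow_eq_pow_val]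

variable {q}

theorem exists_normHom_eq [FrobeniusStar q F] {x : Fˣ} (hx : star (x : F) = x) :
    ∃ t, normHom t = x := by
  have three_le := three_le q F
  have : NeZero (q - 1) := ⟨by omega⟩
  have card_range : Nat.card (normHom : Fˣ →* Fˣ).range = q - 1 := by
    have h := (normHom : Fˣ →* Fˣ).ker.card_mul_index
    rw [Subgroup.index_ker, natCard_ker_normHom q, natCard_units q] at h
    exact Nat.eq_of_mul_eq_mul_left q.succ_pos h
  have range_le : (normHom : Fˣ →* Fˣ).range ≤ rootsOfUnity (q - 1) F := by
    rintro _ ⟨t, rfl⟩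
    rw [mem_rootsOfUnity, pow_sub_one_eq_one_iff, star_normHom]
  have range_eq := Subgroup.eq_of_le_of_card_ge range_le
    ((card_rootsOfUnity F (q - 1)).trans_eq card_range.symm)
  exact MonoidHom.mem_range.1 (range_eq ▸ (pow_sub_one_eq_one_iff q).2 hx)

variable (q F)

theorem exists_star_ne [FrobeniusStar q F] : ∃ x : F, star x ≠ x := by
  have three_le := three_le q F
  by_contra! h
  have : NeZero (q - 1) := ⟨by omega⟩
  have card_le := card_rootsOfUnity F (q - 1)
  have rootsOfUnity_eq_top : rootsOfUnity (q - 1) F = ⊤ := by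
    ext x
    simpa using (pow_sub_one_eq_one_iff q).2 (h x)
  rw [rootsOfUnity_eq_top, Subgroup.card_top, natCard_units q] at card_le
  nlinarith [Nat.sub_add_cancel (by omega : 1 ≤ q)]

theorem natCard_selfAdjoint_mul_natCard_skewAdjoint [FrobeniusStar q F] :
    Nat.card (selfAdjoint F) * Nat.card (skewAdjoint F) = q ^ 2 := by
  have half_add : ∀ x : F, x / 2 + x / 2 = x := add_halves
  let e : F ≃ selfAdjoint F × skewAdjoint F :=
    { toFun x := (⟨(x + star x) / 2, by simp [selfAdjoint.mem_iff, add_comm]⟩,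
        ⟨(x - star x) / 2, by simp [skewAdjoint.mem_iff, ← neg_div]⟩)
      invFun y := y.1 + y.2
      left_inv x := by simp only; linear_combination half_add x
      right_inv y := by
        have hy₁ := selfAdjoint.mem_iff.1 y.1.2
        have hy₂ := skewAdjoint.mem_iff.1 y.2.2
        ext <;> simp only [star_add, hy₁, hy₂]
        · linear_combination half_add y.1.1
        · linear_combination half_add y.2.1 }
  rw [← Nat.card_prod, ← Nat.card_congr e, Nat.card_eq_fintype_card, card_eq]

theorem natCard_selfAdjoint_eq_natCard_skewAdjoint [FrobeniusStar q F] :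
    Nat.card (selfAdjoint F) = Nat.card (skewAdjoint F) := by
  obtain ⟨x, hx⟩ := exists_star_ne q F
  let δ := x - star x
  have δ_ne_zero : δ ≠ 0 := sub_ne_zero.2 hx.symm
  have star_δ : star δ = -δ := by simp [δ]
  refine Nat.card_congr
    { toFun y := ⟨δ * y, by
        rw [skewAdjoint.mem_iff, star_mul', star_δ, selfAdjoint.mem_iff.1 y.2, neg_mul]⟩
      invFun z := ⟨δ⁻¹ * z, by
        rw [selfAdjoint.mem_iff, star_mul', star_inv₀, star_δ, skewAdjoint.mem_iff.1 z.2,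
          inv_neg, neg_mul_neg]⟩
      left_inv y := Subtype.ext (inv_mul_cancel_left₀ δ_ne_zero _)
      right_inv z := Subtype.ext (mul_inv_cancel_left₀ δ_ne_zero _) }

theorem natCard_skewAdjoint [FrobeniusStar q F] : Nat.card (skewAdjoint F) = q := by
  have h := natCard_selfAdjoint_mul_natCard_skewAdjoint q F
  rw [natCard_selfAdjoint_eq_natCard_skewAdjoint q F, ← sq] at h
  exact Nat.pow_left_injective two_ne_zero h

theorem natCard_multiplicative_skewAdjoint [FrobeniusStar q F] :
    Nat.card (Multiplicative (skewAdjoint F)) = q := by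
  rw [Nat.card_congr Multiplicative.toAdd, natCard_skewAdjoint q F]

theorem natCard_selfAdjoint [FrobeniusStar q F] : Nat.card (selfAdjoint F) = q :=
  (natCard_selfAdjoint_eq_natCard_skewAdjoint q F).trans (natCard_skewAdjoint q F)

end FrobeniusStar

end FrobeniusStar

section Heisenberg

variable (R : Type*) [CommRing R] [StarRing R]

/-- The Heisenberg group of pairs `(a, b)` with `b + star b + a * star a = 0`: over `F` it is the
unipotent radical of the Borel subgroup of `SU₃`, with `(a, b)` standing for
`!![1, -star a, b; 0, 1, a; 0, 0, 1]`. -/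
@[ext]
structure Heis where
  a : R
  b : R
  add_star_add_mul_star : b + star b + a * star a = 0

namespace Heis

variable {R}

theorem star_b (x : Heis R) : star x.b = -x.b - x.a * star x.a := by
  linear_combination x.add_star_add_mul_star

instance : Mul (Heis R) where
  mul x y := ⟨x.a + y.a, x.b + y.b - star x.a * y.a, by
    simp only [star_add, star_sub, star_mul', star_star, star_b]
    ring⟩

instance : One (Heis R) where
  one := ⟨0, 0, by simp⟩

instance : Inv (Heis R) where
  inv x := ⟨-x.a, star x.b, by
    rw [star_star, star_neg]
    linear_combination x.add_star_add_mul_star⟩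

@[simp] theorem mul_a (x y : Heis R) : (x * y).a = x.a + y.a := rfl

@[simp] theorem mul_b (x y : Heis R) : (x * y).b = x.b + y.b - star x.a * y.a := rfl

@[simp] theorem one_a : (1 : Heis R).a = 0 := rfl

@[simp] theorem one_b : (1 : Heis R).b = 0 := rfl

@[simp] theorem inv_a (x : Heis R) : x⁻¹.a = -x.a := rfl

@[simp] theorem inv_b (x : Heis R) : x⁻¹.b = star x.b := rfl

instance : Group (Heis R) where
  mul_assoc x y z := by ext <;> simp <;> ring
  one_mul x := by ext <;> simp
  mul_one x := by ext <;> simp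
  inv_mul_cancel x := by
    ext
    · simp
    · simp [star_b]
      ring

/-- The centre of the Heisenberg group consists of the pairs `(0, z)` with `star z = -z`. -/
def center : Multiplicative (skewAdjoint R) →* Heis R where
  toFun z := ⟨0, z.toAdd, by rw [skewAdjoint.mem_iff.1 z.toAdd.2]; simp⟩
  map_one' := rfl
  map_mul' z w := by ext <;> simp

@[simp] theorem center_a (z : Multiplicative (skewAdjoint R)) : (center z).a = 0 := rfl

@[simp] theorem center_b (z : Multiplicative (skewAdjoint R)) : (center z).b = z.toAdd := rfl

theorem center_injective : Function.Injective (center : _ →* Heis R) := fun _ _ h =>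
  Multiplicative.toAdd.injective (Subtype.ext (congrArg b h))

theorem center_mul_comm (z : Multiplicative (skewAdjoint R)) (x : Heis R) :
    center z * x = x * center z := by
  ext <;> simp [add_comm]

theorem exists_center_eq {x : Heis R} (hx : x.a = 0) : ∃ z, center z = x := by
  have star_b := x.star_b
  rw [hx, zero_mul, sub_zero] at star_b
  exact ⟨.ofAdd ⟨x.b, star_b⟩, Heis.ext hx.symm rfl⟩

end Heis

end Heisenberg

section HeisenbergField

namespace Heis

variable {F : Type*} [Field F] [StarRing F]

/-- The section `a ↦ (a, -a * star a / 2)` of the projection to the first coordinate. -/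
def lift [NeZero (2 : F)] (a : F) : Heis F :=
  ⟨a, -(a * star a) / 2, by
    simp only [star_div₀, star_neg, star_mul', star_star, star_ofNat]
    field_simp
    ring⟩

@[simp] theorem lift_a [NeZero (2 : F)] (a : F) : (lift a).a = a := rfl

@[simp] theorem lift_b [NeZero (2 : F)] (a : F) : (lift a).b = -(a * star a) / 2 := rfl

/-- The coordinates `(a, z) ↦ center z * lift a` on the Heisenberg group. -/
def coordEquiv [NeZero (2 : F)] : F × Multiplicative (skewAdjoint F) ≃ Heis F where
  toFun y := center y.2 * lift y.1
  invFun x := (x.a, .ofAdd ⟨x.b + x.a * star x.a / 2, by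
    simp only [skewAdjoint.mem_iff, star_add, star_div₀, star_mul', star_star, star_ofNat, star_b]
    field_simp
    ring⟩)
  left_inv y := by ext <;> simp; ring
  right_inv x := by ext <;> simp; ring

instance [DecidableEq F] : DecidableEq (Heis F) := fun _ _ => decidable_of_iff _ Heis.ext_iff.symm

instance [Finite F] : Finite (Heis F) :=
  .of_injective (fun x => (x.a, x.b)) fun _ _ h => Heis.ext (congrArg Prod.fst h)
    (congrArg Prod.snd h)

instance [Finite F] : Fintype (Heis F) := .ofFinite _

theorem natCard_eq (q : ℕ) [Fintype F] [FrobeniusStar q F] : Nat.card (Heis F) = q ^ 3 := by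
  rw [← Nat.card_congr coordEquiv, Nat.card_prod, Nat.card_eq_fintype_card,
    FrobeniusStar.card_eq (F := F), FrobeniusStar.natCard_multiplicative_skewAdjoint q]
  ring

/-- The torus of `SU₃` acts on the unipotent radical by conjugation. -/
instance : MulDistribMulAction Fˣ (Heis F) where
  smul t x := ⟨twistHom t * x.a, normHom t * x.b, by
    rw [star_mul', star_mul', star_normHom, star_b, mul_mul_mul_comm, twistHom_mul_star_twistHom]
    ring⟩
  one_smul x := Heis.ext (by simp [HSMul.hSMul]) (by simp [HSMul.hSMul])
  mul_smul t u x := Heis.ext (by simp [HSMul.hSMul, mul_assoc]) (by simp [HSMul.hSMul, mul_assoc])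
  smul_one t := Heis.ext (mul_zero _) (mul_zero _)
  smul_mul t x y := Heis.ext (mul_add _ _ _) (by
    simp only [HSMul.hSMul, mul_b, star_mul', ← twistHom_mul_star_twistHom]
    ring)

@[simp] theorem smul_a (t : Fˣ) (x : Heis F) : (t • x).a = twistHom t * x.a := rfl

@[simp] theorem smul_b (t : Fˣ) (x : Heis F) : (t • x).b = normHom t * x.b := rfl

theorem smul_eq_self_of_twistHom_eq_one {t : Fˣ} (ht : twistHom t = 1) (x : Heis F) :
    t • x = x := by
  ext <;> simp [ht, normHom_eq_one_of_twistHom_eq_one ht]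

theorem exists_conj_eq_center_mul [NeZero (2 : F)] {x : Heis F} (hx : x.a ≠ 0)
    (z : Multiplicative (skewAdjoint F)) : ∃ y, y * x * y⁻¹ = center z * x := by
  have star_a_ne_zero := star_ne_zero.2 hx
  have star_z := skewAdjoint.mem_iff.1 z.toAdd.2
  refine ⟨lift (z.toAdd / (2 * star x.a)), ?_⟩
  rw [mul_inv_eq_iff_eq_mul]
  ext
  · simp [add_comm]
  · simp [-RCLike.star_def, star_z]
    field_simp
    ring

theorem exists_smul_center_eq {q : ℕ} [Fintype F] [FrobeniusStar q F]
    {z w : Multiplicative (skewAdjoint F)} (hz : z ≠ 1) (hw : w ≠ 1) :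
    ∃ t : Fˣ, t • (center z : Heis F) = center w := by
  have z_ne_zero : (z.toAdd : F) ≠ 0 := fun h => hz (Multiplicative.toAdd.injective (Subtype.ext h))
  have w_ne_zero : (w.toAdd : F) ≠ 0 := fun h => hw (Multiplicative.toAdd.injective (Subtype.ext h))
  obtain ⟨t, ht⟩ := FrobeniusStar.exists_normHom_eq (x := .mk0 _ (div_ne_zero w_ne_zero z_ne_zero))
    (by rw [Units.val_mk0, star_div₀, skewAdjoint.mem_iff.1 w.toAdd.2,
      skewAdjoint.mem_iff.1 z.toAdd.2, neg_div_neg_eq])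
  exact ⟨t, by ext <;> simp [ht, z_ne_zero]⟩

end Heis

variable (F : Type*) [Field F] [StarRing F]

/-- The semidirect product of the Heisenberg group with the torus, a model for the Borel subgroup
of `SU₃`. -/
abbrev HeisTorus : Type _ :=
  Heis F ⋊[MulDistribMulAction.toMulAut Fˣ (Heis F)] Fˣ

instance [Finite F] : Finite (HeisTorus F) :=
  .of_equiv _ SemidirectProduct.equivProd.symm

instance [Finite F] : Fintype (HeisTorus F) := .ofFinite _

variable {F}

theorem sum_heisTorus [Finite F] [Fintype Fˣ] {M : Type*} [AddCommMonoid M]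
    (f : HeisTorus F → M) :
    ∑ g, f g = ∑ t : Fˣ, ∑ x : Heis F, f (.inl x * .inr t) := by
  rw [← Fintype.sum_prod_type_right', ← SemidirectProduct.equivProd.symm.sum_comp]
  simp only [SemidirectProduct.mk_eq_inl_mul_inr, SemidirectProduct.equivProd, Equiv.coe_fn_symm_mk]

end HeisenbergField

section Borel

open SemidirectProduct

variable {F : Type} [Field F]

theorem Om_eq : Om F = !![0, 0, 1; 0, 1, 0; 1, 0, 0] := by
  ext i j
  fin_cases i <;> fin_cases j <;> simp [Om]

variable [StarRing F]

/-- The unipotent upper triangular matrix attached to an element of the Heisenberg group. -/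
def unipotentMatrix (x : Heis F) : Matrix (Fin 3) (Fin 3) F :=
  !![1, -star x.a, x.b; 0, 1, x.a; 0, 0, 1]

/-- The diagonal matrix in `SU₃` with upper left entry `t`. -/
def torusMatrix (t : Fˣ) : Matrix (Fin 3) (Fin 3) F :=
  !![(t : F), 0, 0; 0, star (t : F) * (t : F)⁻¹, 0; 0, 0, (star (t : F))⁻¹]

theorem unipotentMatrix_mul (x y : Heis F) :
    unipotentMatrix (x * y) = unipotentMatrix x * unipotentMatrix y := by
  ext i j
  fin_cases i <;> fin_cases j <;>
    simp [-RCLike.star_def, unipotentMatrix, mul_apply, Fin.sum_univ_three, add_comm]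
  ring

theorem torusMatrix_mul (t u : Fˣ) : torusMatrix (t * u) = torusMatrix t * torusMatrix u := by
  ext i j
  fin_cases i <;> fin_cases j <;>
    simp [-RCLike.star_def, torusMatrix, mul_apply, Fin.sum_univ_three, mul_comm]
  ring

theorem unipotentMatrix_smul_mul_torusMatrix (t : Fˣ) (x : Heis F) :
    unipotentMatrix (t • x) * torusMatrix t = torusMatrix t * unipotentMatrix x := by
  have t_ne_zero := t.ne_zero
  have star_ne_zero := (star_ne_zero (x := (t : F))).2 t_ne_zero
  ext i j
  fin_cases i <;> fin_cases j <;>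
    simp [-RCLike.star_def, unipotentMatrix, torusMatrix, mul_apply, Fin.sum_univ_three,
      coe_twistHom, coe_normHom] <;>
    field_simp

theorem unipotentMatrix_unitary (x : Heis F) :
    (unipotentMatrix x)ᴴ * Om F * unipotentMatrix x = Om F := by
  rw [Om_eq]
  ext i j
  fin_cases i <;> fin_cases j <;>
    simp [-RCLike.star_def, unipotentMatrix, mul_apply, Fin.sum_univ_three, x.star_b]
  ring

theorem torusMatrix_unitary (t : Fˣ) : (torusMatrix t)ᴴ * Om F * torusMatrix t = Om F := by
  have t_ne_zero := t.ne_zero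
  have star_ne_zero := (star_ne_zero (x := (t : F))).2 t_ne_zero
  rw [Om_eq]
  ext i j
  fin_cases i <;> fin_cases j <;>
    simp [-RCLike.star_def, torusMatrix, mul_apply, Fin.sum_univ_three, t_ne_zero,
      star_ne_zero]
  field_simp

theorem exists_unipotentMatrix_mul_torusMatrix_eq {g : Matrix (Fin 3) (Fin 3) F}
    (triangular : g.BlockTriangular id) (det_eq_one : g.det = 1)
    (unitary : gᴴ * Om F * g = Om F) :
    ∃ x t, unipotentMatrix x * torusMatrix t = g := by
  obtain ⟨a, b, c, d, e, f, rfl⟩ : ∃ a b c d e f, g = !![a, b, c; 0, d, e; 0, 0, f] := by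
    refine ⟨g 0 0, g 0 1, g 0 2, g 1 1, g 1 2, g 2 2, ?_⟩
    ext i j
    fin_cases i <;> fin_cases j <;> first | rfl | exact triangular (by decide)
  have a_mul_d_mul_f : a * d * f = 1 := by simpa [det_fin_three] using det_eq_one
  have a_ne_zero : a ≠ 0 := by rintro rfl; simp at a_mul_d_mul_f
  have star_a_ne_zero : star a ≠ 0 := star_ne_zero.2 a_ne_zero
  have conjTranspose_eq : (!![a, b, c; 0, d, e; 0, 0, f])ᴴ =
      !![star a, 0, 0; star b, star d, 0; star c, star e, star f] := by
    ext i j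
    fin_cases i <;> fin_cases j <;> simp [-RCLike.star_def]
  rw [Om_eq, conjTranspose_eq] at unitary
  have entry_02 : star a * f = 1 := by
    simpa [mul_apply, Fin.sum_univ_three] using congrFun₂ unitary 0 2
  have entry_12 : star d * e + star b * f = 0 := by
    simpa [mul_apply, Fin.sum_univ_three] using congrFun₂ unitary 1 2
  have entry_22 : star f * c + star e * e + star c * f = 0 := by
    simpa [mul_apply, Fin.sum_univ_three] using congrFun₂ unitary 2 2
  obtain rfl : f = (star a)⁻¹ := eq_inv_of_mul_eq_one_right entry_02
  obtain rfl : d = star a * a⁻¹ := by field_simp at a_mul_d_mul_f ⊢; exact a_mul_d_mul_f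
  simp only [star_mul', star_inv₀, star_star] at entry_12 entry_22
  obtain rfl : b = -star e * star a := by
    rw [← star_star b, neg_mul, ← star_mul', ← star_neg]
    field_simp at entry_12
    exact congrArg star (by linear_combination entry_12)
  refine ⟨⟨e * star a, c * star a, ?_⟩, Units.mk0 a a_ne_zero, ?_⟩
  · simp only [star_mul', star_star]
    field_simp at entry_22
    linear_combination entry_22
  · ext i j
    fin_cases i <;> fin_cases j <;>
      simp [-RCLike.star_def, unipotentMatrix, torusMatrix, mul_apply, Fin.sum_univ_three] <;>
      field_simp

theorem det_unipotentMatrix (x : Heis F) : (unipotentMatrix x).det = 1 := by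
  simp [-RCLike.star_def, unipotentMatrix, det_fin_three]

theorem det_torusMatrix (t : Fˣ) : (torusMatrix t).det = 1 := by
  have star_ne_zero := (star_ne_zero (x := (t : F))).2 t.ne_zero
  simp [-RCLike.star_def, torusMatrix, det_fin_three]
  field_simp

theorem blockTriangular_unipotentMatrix (x : Heis F) : (unipotentMatrix x).BlockTriangular id := by
  intro i j hij
  fin_cases i <;> fin_cases j <;> simp [-RCLike.star_def, unipotentMatrix] at hij ⊢

theorem blockTriangular_torusMatrix (t : Fˣ) : (torusMatrix t).BlockTriangular id := by
  intro i j hij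
  fin_cases i <;> fin_cases j <;> simp [-RCLike.star_def, torusMatrix] at hij ⊢

variable {p k : ℕ} [ExpChar F p]

theorem transpose_Phi (hstar : ∀ x : F, star x = x ^ p ^ k) (g : Matrix (Fin 3) (Fin 3) F) :
    (Phi p k F g)ᵀ = gᴴ := by
  ext i j
  simp [Phi, hstar, iterateFrobenius_def]

/-- The element of the Borel subgroup with a given underlying matrix. -/
def borelOfMatrix (hstar : ∀ x : F, star x = x ^ p ^ k) (g : Matrix (Fin 3) (Fin 3) F)
    (det_eq_one : g.det = 1) (triangular : g.BlockTriangular id)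
    (unitary : gᴴ * Om F * g = Om F) : Borel p k F :=
  ⟨⟨⟨g, det_eq_one⟩, by
    change (Phi p k F g)ᵀ * Om F * g = Om F
    rwa [transpose_Phi hstar]⟩, triangular⟩

/-- The embedding of the Heisenberg group into the Borel subgroup. -/
def unipotentHom (hstar : ∀ x : F, star x = x ^ p ^ k) : Heis F →* Borel p k F where
  toFun x := borelOfMatrix hstar (unipotentMatrix x) (det_unipotentMatrix x)
    (blockTriangular_unipotentMatrix x) (unipotentMatrix_unitary x)
  map_one' := Subtype.ext <| Subtype.ext <| Subtype.ext <| by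
    ext i j
    fin_cases i <;> fin_cases j <;> simp [borelOfMatrix, unipotentMatrix]
  map_mul' x y := Subtype.ext <| Subtype.ext <| Subtype.ext <| unipotentMatrix_mul x y

/-- The embedding of the torus into the Borel subgroup. -/
def torusHom (hstar : ∀ x : F, star x = x ^ p ^ k) : Fˣ →* Borel p k F where
  toFun t := borelOfMatrix hstar (torusMatrix t) (det_torusMatrix t)
    (blockTriangular_torusMatrix t) (torusMatrix_unitary t)
  map_one' := Subtype.ext <| Subtype.ext <| Subtype.ext <| by
    ext i j
    fin_cases i <;> fin_cases j <;> simp [borelOfMatrix, torusMatrix]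
  map_mul' t u := Subtype.ext <| Subtype.ext <| Subtype.ext <| torusMatrix_mul t u

/-- The map from the semidirect product to the Borel subgroup. -/
def borelHom (hstar : ∀ x : F, star x = x ^ p ^ k) : HeisTorus F →* Borel p k F :=
  SemidirectProduct.lift (unipotentHom hstar) (torusHom hstar) fun t => MonoidHom.ext fun x =>
    eq_mul_inv_of_mul_eq <| Subtype.ext <| Subtype.ext <| Subtype.ext <|
      unipotentMatrix_smul_mul_torusMatrix t x

theorem borelHom_injective (hstar : ∀ x : F, star x = x ^ p ^ k) :
    Function.Injective (borelHom hstar) := by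
  refine (injective_iff_map_eq_one _).2 fun g hg => ?_
  have eq_one : unipotentMatrix g.left * torusMatrix g.right = 1 :=
    congrArg (fun h : Borel p k F => h.1.1.1) hg
  have right_eq : g.right = 1 := Units.ext <| by
    simpa [-RCLike.star_def, unipotentMatrix, torusMatrix, mul_apply, Fin.sum_univ_three]
      using congrFun₂ eq_one 0 0
  have unipotent_eq : unipotentMatrix g.left = 1 := by
    simpa [right_eq, torusMatrix, ← one_fin_three] using eq_one
  exact SemidirectProduct.ext
    (Heis.ext (congrFun₂ unipotent_eq 1 2) (congrFun₂ unipotent_eq 0 2)) right_eq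

theorem borelHom_surjective (hstar : ∀ x : F, star x = x ^ p ^ k) :
    Function.Surjective (borelHom hstar) := by
  rintro ⟨⟨⟨g, det_eq_one⟩, unitary⟩, triangular⟩
  change (Phi p k F g)ᵀ * Om F * g = Om F at unitary
  rw [transpose_Phi hstar] at unitary
  obtain ⟨x, t, h⟩ := exists_unipotentMatrix_mul_torusMatrix_eq triangular det_eq_one unitary
  exact ⟨⟨x, t⟩, Subtype.ext <| Subtype.ext <| Subtype.ext h⟩

/-- The Borel subgroup of `SU₃` as a semidirect product. -/
def borelEquiv (hstar : ∀ x : F, star x = x ^ p ^ k) : HeisTorus F ≃* Borel p k F :=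
  .ofBijective (borelHom hstar) ⟨borelHom_injective hstar, borelHom_surjective hstar⟩

end Borel

section SumOfSquares

/- The integrality of `r` is what decides: comparing `y` with `1` and with the sign function of `Q`
in mean square gives `r < d + 1` and `d ≤ r`, and for `r = d` the second distance vanishes. -/
theorem eq_ite_of_sum_sq {α : Type*} [DecidableEq α] {S Q : Finset α} {y : α → ℚ} {N d r : ℕ}
    (hQS : Q ⊆ S) (hN : 0 < N) (hd : 0 < d) (card_S : (S.card : ℚ) = N - d)
    (sum_Q : 2 * ∑ t ∈ Q, y t = N) (sum_sq : ∑ t ∈ S, y t ^ 2 = N - d)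
    (sum_S : ∑ t ∈ S, y t = N * r - d * (N - 1)) {t : α} (ht : t ∈ S) :
    y t = if t ∈ Q then 1 else -1 := by
  have dist_sign : ∑ t ∈ S, (y t - if t ∈ Q then 1 else -1) ^ 2 = 2 * N * (r - d : ℚ) := by
    have expand (t) : (y t - if t ∈ Q then 1 else -1) ^ 2 =
        y t ^ 2 + 2 * y t + 1 - 4 * (if t ∈ Q then y t else 0) := by
      split_ifs <;> ring
    simp only [expand, Finset.sum_sub_distrib, Finset.sum_add_distrib, ← Finset.mul_sum, sum_sq,
      sum_S, Finset.sum_ite_mem, Finset.inter_eq_right.2 hQS, Finset.sum_const, nsmul_eq_mul,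
      card_S]
    linear_combination -2 * sum_Q
  have dist_one : ∑ t ∈ S, (y t - 1) ^ 2 = 2 * N * (1 + d - r : ℚ) - 4 * d := by
    have expand (t) : (y t - 1) ^ 2 = y t ^ 2 - 2 * y t + 1 := by ring
    simp only [expand, Finset.sum_sub_distrib, Finset.sum_add_distrib, ← Finset.mul_sum, sum_sq,
      sum_S, Finset.sum_const, nsmul_eq_mul, card_S]
    ring
  have dist_sign_nonneg := dist_sign ▸ S.sum_nonneg fun t _ => sq_nonneg (y t - _)
  have dist_one_nonneg := dist_one ▸ S.sum_nonneg fun t _ => sq_nonneg (y t - 1)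
  have N_pos : (0 : ℚ) < 2 * N := by positivity
  have d_pos : (0 : ℚ) < d := by exact_mod_cast hd
  have d_le : d ≤ r := by
    exact_mod_cast sub_nonneg.1 (nonneg_of_mul_nonneg_right dist_sign_nonneg N_pos)
  have r_lt : r < d + 1 := by
    have : (0 : ℚ) < 1 + d - r := pos_of_mul_pos_right (by linarith) N_pos.le
    exact_mod_cast (by linarith : (r : ℚ) < d + 1)
  obtain rfl : r = d := by omega
  rw [sub_self, mul_zero, Finset.sum_eq_zero_iff_of_nonneg fun _ _ => sq_nonneg _] at dist_sign
  exact sub_eq_zero.1 (pow_eq_zero_iff two_ne_zero |>.1 (dist_sign t ht))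

end SumOfSquares

section TorusSums

variable (q : ℕ) (F : Type*) [Field F] [Fintype F] [DecidableEq F]

/-- The nonsquares of the norm one torus, which is cyclic of order `q + 1`. -/
def nonsquareTorus : Finset Fˣ := {t | t ^ ((q + 1) / 2) = -1}

variable {q F}

theorem mem_nonsquareTorus {t : Fˣ} : t ∈ nonsquareTorus q F ↔ t ^ ((q + 1) / 2) = -1 := by
  simp [nonsquareTorus]

variable [StarRing F]

variable (F) in
/-- The noncentral elements of the norm one torus. -/
def regularTorus : Finset Fˣ := {t | normHom t = 1 ∧ twistHom t ≠ 1}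

theorem mem_regularTorus {t : Fˣ} : t ∈ regularTorus F ↔ normHom t = 1 ∧ twistHom t ≠ 1 := by
  simp [regularTorus]

theorem sum_eq_sum_regularTorus_add {f : Fˣ → ℚ} {c : ℚ} (h_norm : ∀ t, normHom t ≠ 1 → f t = 0)
    (h_twist : ∀ t, twistHom t = 1 → f t = c) :
    ∑ t, f t = ∑ t ∈ regularTorus F, f t + Nat.card (twistHom : Fˣ →* Fˣ).ker * c := by
  rw [← Finset.sum_filter_not_add_sum_filter _ (fun t : Fˣ => twistHom t = 1),
    Finset.sum_congr rfl fun t ht => h_twist t (Finset.mem_filter.1 ht).2, Finset.sum_const,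
    nsmul_eq_mul, Nat.card_eq_fintype_card, Fintype.card_subtype]
  simp only [MonoidHom.mem_ker]
  congr 1
  refine (Finset.sum_subset (fun t ht => ?_) fun t ht ht' => h_norm t fun h => ht' ?_).symm
  · simpa using (mem_regularTorus.1 ht).2
  · exact mem_regularTorus.2 ⟨h, (Finset.mem_filter.1 ht).2⟩

theorem card_regularTorus [FrobeniusStar q F] :
    ((regularTorus F).card : ℚ) = q + 1 - Nat.card (twistHom : Fˣ →* Fˣ).ker := by
  have h := sum_eq_sum_regularTorus_add (F := F) (f := fun t => if normHom t = 1 then 1 else 0)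
    (fun t ht => if_neg ht) (fun t ht => if_pos (normHom_eq_one_of_twistHom_eq_one ht))
  have card_ker := FrobeniusStar.natCard_ker_normHom q (F := F)
  rw [Nat.card_eq_fintype_card, Fintype.card_subtype] at card_ker
  simp only [MonoidHom.mem_ker] at card_ker
  rw [Finset.sum_boole, Finset.sum_congr rfl fun t ht => if_pos (mem_regularTorus.1 ht).1,
    Finset.sum_const, nsmul_one, mul_one] at h
  rw [eq_sub_iff_add_eq, ← h]
  exact_mod_cast card_ker

theorem nonsquareTorus_subset [FrobeniusStar q F] : nonsquareTorus q F ⊆ regularTorus F := by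
  intro t ht
  rw [mem_nonsquareTorus] at ht
  rw [mem_regularTorus, FrobeniusStar.normHom_eq_pow q, ← FrobeniusStar.half_mul_two q F,
    pow_mul, ht, neg_one_sq]
  refine ⟨rfl, fun h => FrobeniusStar.neg_one_ne_one q F ?_⟩
  calc (-1 : Fˣ) = (t ^ ((q + 1) / 2)) ^ 3 := by rw [ht, Odd.neg_one_pow (by decide)]
    _ = (t ^ 3) ^ ((q + 1) / 2) := pow_right_comm t _ _
    _ = 1 := by rw [pow_three_eq_one_of_twistHom_eq_one h, one_pow]

theorem isSquare_of_mem_nonsquareTorus [FrobeniusStar q F] {t : Fˣ} (ht : t ∈ nonsquareTorus q F) :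
    IsSquare t := by
  obtain ⟨m, hm⟩ := FrobeniusStar.odd F (q := q)
  have exponent_eq : Fintype.card F / 2 = (q + 1) / 2 * (2 * m) := by
    rw [FrobeniusStar.card_eq (F := F), hm, show (2 * m + 1 + 1) / 2 = m + 1 by omega,
      show (2 * m + 1) ^ 2 = 2 * ((m + 1) * (2 * m)) + 1 by ring]
    omega
  rw [FiniteField.unit_isSquare_iff (FrobeniusStar.ringChar_ne_two q F), exponent_eq, pow_mul,
    mem_nonsquareTorus.1 ht, (even_two_mul m).neg_one_pow]

theorem filter_mul_self_eq [FrobeniusStar q F] {s : Fˣ} (hs : s * s ∈ nonsquareTorus q F) :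
    ({t | normHom t = -1 ∧ t * t = s * s} : Finset Fˣ) = {s, -s} := by
  have even : Even (q + 1) := (FrobeniusStar.odd F (q := q)).add_one
  have norm_s : s ^ (q + 1) = -1 := by
    rw [← mem_nonsquareTorus.1 hs, ← sq, ← pow_mul, mul_comm 2,
      FrobeniusStar.half_mul_two q F]
  ext t
  simp only [Finset.mem_filter_univ, Finset.mem_insert, Finset.mem_singleton,
    FrobeniusStar.normHom_eq_pow q]
  constructor
  · rintro ⟨-, h⟩
    simpa [Units.ext_iff] using mul_self_eq_mul_self_iff.1 (congrArg Units.val h)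
  · rintro (rfl | rfl)
    · exact ⟨norm_s, rfl⟩
    · exact ⟨by rw [even.neg_pow, norm_s], neg_mul_neg s s⟩

theorem sum_mul_self_of_normHom_eq_neg_one [FrobeniusStar q F] (f : Fˣ → ℚ) :
    ∑ t with normHom t = -1, f (t * t) = 2 * ∑ t ∈ nonsquareTorus q F, f t := by
  have maps_to : ∀ t ∈ Finset.univ.filter (fun t : Fˣ => normHom t = -1),
      t * t ∈ nonsquareTorus q F := by
    intro t ht
    rw [mem_nonsquareTorus, ← sq, ← pow_mul, mul_comm, FrobeniusStar.half_mul_two q F,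
      ← FrobeniusStar.normHom_eq_pow q, (Finset.mem_filter.1 ht).2]
  rw [← Finset.sum_fiberwise_of_maps_to maps_to, Finset.mul_sum]
  refine Finset.sum_congr rfl fun c hc => ?_
  obtain ⟨s, rfl⟩ := isSquare_of_mem_nonsquareTorus hc
  have s_ne_neg : s ≠ -s := fun h => FrobeniusStar.neg_one_ne_one q F <|
    mul_right_cancel (b := s) (by rw [neg_one_mul, one_mul, ← h])
  rw [Finset.sum_congr rfl fun t ht => congrArg f (Finset.mem_filter.1 ht).2, Finset.sum_const,
    Finset.filter_filter, filter_mul_self_eq hc, Finset.card_pair s_ne_neg, nsmul_eq_mul,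
    Nat.cast_ofNat]

end TorusSums

section ClassFunctions

open SemidirectProduct

variable {F : Type*} [Field F] [StarRing F]

theorem inr_mul_inl (t : Fˣ) (x : Heis F) :
    (inr t * inl x : HeisTorus F) = inl (t • x) * inr t := by
  ext <;> simp

theorem inl_mul_inl_mul_inr_mul_inv (x y : Heis F) (t : Fˣ) :
    (inl y * (inl x * inr t) * (inl y)⁻¹ : HeisTorus F) = inl (y * x * t • y⁻¹) * inr t := by
  rw [← map_inv, mul_assoc, mul_assoc, inr_mul_inl, ← mul_assoc, ← mul_assoc, ← map_mul, ← map_mul]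

theorem inr_mul_inl_mul_inr_mul_inv (x : Heis F) (t u : Fˣ) :
    (inr t * (inl x * inr u) * (inr t)⁻¹ : HeisTorus F) = inl (t • x) * inr u := by
  rw [← mul_assoc, inr_mul_inl, mul_assoc, mul_assoc, ← map_inv, ← map_mul, ← map_mul,
    ← mul_assoc, mul_inv_cancel_comm]

theorem inl_mul_inr_mul_self (x : Heis F) (t : Fˣ) :
    (inl x * inr t * (inl x * inr t) : HeisTorus F) = inl (x * t • x) * inr (t * t) := by
  rw [mul_assoc, ← mul_assoc (inr t), inr_mul_inl, mul_assoc, ← map_mul, ← mul_assoc, ← map_mul]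

/- The map `a ↦ (1 - twistHom t) * a` describes the first coordinate, hence the bijectivity. -/
theorem bijective_lift_mul_center_mul_smul_inv [Finite F] [NeZero (2 : F)] {t : Fˣ}
    (ht : twistHom t ≠ 1) : Function.Bijective fun y : F × Multiplicative (skewAdjoint F) =>
      Heis.lift y.1 * Heis.center y.2 * t • (Heis.lift y.1)⁻¹ := by
  have := Fintype.ofFinite F
  refine (Fintype.bijective_iff_injective_and_card _).2 ⟨?_, Fintype.card_congr Heis.coordEquiv⟩
  rintro ⟨a, z⟩ ⟨b, w⟩ h
  have h_a : (1 - (twistHom t : F)) * a = (1 - twistHom t) * b := by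
    have := congrArg Heis.a h
    simp only [Heis.mul_a, Heis.lift_a, Heis.center_a, Heis.smul_a, Heis.inv_a] at this
    linear_combination this
  obtain rfl : a = b :=
    mul_left_cancel₀ (sub_ne_zero.2 fun h => ht (Units.ext h.symm)) h_a
  exact congrArg (Prod.mk a) (Heis.center_injective (mul_left_cancel (mul_right_cancel h)))

theorem sum_heis_of_support [Finite F] [NeZero (2 : F)] {f : Heis F → ℚ}
    (hf : ∀ x, x.a ≠ 0 → f x = 0) : ∑ x, f x = ∑ z, f (Heis.center z) := by
  have := Fintype.ofFinite F
  rw [← Heis.coordEquiv.sum_comp, Fintype.sum_prod_type, Finset.sum_eq_single 0]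
  · refine Finset.sum_congr rfl fun z _ => congrArg f ?_
    ext <;> simp [Heis.coordEquiv]
  · exact fun a _ ha => Finset.sum_eq_zero fun z _ => hf _ (by simpa [Heis.coordEquiv] using ha)
  · simp

variable [Fintype F]

theorem natCard_heisTorus (q : ℕ) [FrobeniusStar q F] :
    (Nat.card (HeisTorus F) : ℚ) = q ^ 3 * (q ^ 2 - 1) := by
  have one_le : 1 ≤ q := by have := FrobeniusStar.three_le q F; omega
  rw [SemidirectProduct.card, Heis.natCard_eq q, FrobeniusStar.natCard_units q]
  push_cast [Nat.cast_sub one_le]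
  ring

theorem sum_inl_mul_inr_of_twistHom_ne_one {q : ℕ} [FrobeniusStar q F] {R : Type*} [Semiring R]
    {f : HeisTorus F → R} (hf : ∀ g h, f (h * g * h⁻¹) = f g) {t : Fˣ} (ht : twistHom t ≠ 1) :
    ∑ x, f (inl x * inr t) = q ^ 2 * ∑ z, f (inl (Heis.center z) * inr t) := by
  rw [← (bijective_lift_mul_center_mul_smul_inv ht).sum_comp, Fintype.sum_prod_type]
  simp only [← inl_mul_inl_mul_inr_mul_inv, hf, Finset.sum_const, Finset.card_univ,
    FrobeniusStar.card_eq (F := F), nsmul_eq_mul, Nat.cast_pow]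

end ClassFunctions

section Candidate

open SemidirectProduct

variable (q : ℕ) {F : Type*} [Field F] [Fintype F] [StarRing F] [DecidableEq F]

/-- The properties of a rational irreducible character of degree `q ^ 2 - q` and Frobenius–Schur
indicator `1` which determine it: the restriction to the centre of the Heisenberg group avoids
the trivial character, the centre of the whole group acts trivially, the character has norm `1`,
and it contains the trivial character of the torus with some multiplicity. -/
structure IsCandidate (ψ : HeisTorus F → ℚ) : Prop where
  conj : ∀ g h, ψ (h * g * h⁻¹) = ψ g
  sum_center_mul : ∀ g, ∑ z, ψ (inl (Heis.center z) * g) = 0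
  mul_inr : ∀ t, twistHom t = 1 → ∀ g, ψ (g * inr t) = ψ g
  apply_one : ψ 1 = q ^ 2 - q
  sum_sq : ∑ g, ψ g ^ 2 = Nat.card (HeisTorus F)
  sum_mul_self : ∑ g, ψ (g * g) = Nat.card (HeisTorus F)
  exists_sum_inr : ∃ r : ℕ, ∑ t, ψ (inr t) = (q ^ 2 - 1) * r

namespace IsCandidate

variable {q} {ψ : HeisTorus F → ℚ}

theorem eq_zero_of_forall_center_mul (h : IsCandidate q ψ) {g : HeisTorus F}
    (hg : ∀ z, ψ (inl (Heis.center z) * g) = ψ g) : ψ g = 0 := by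
  have sum_eq := h.sum_center_mul g
  simp only [hg, Finset.sum_const, smul_eq_zero, Finset.card_eq_zero,
    Finset.univ_eq_empty_iff, not_isEmpty_of_nonempty, false_or] at sum_eq
  exact sum_eq

theorem apply_inr_of_twistHom_eq_one (h : IsCandidate q ψ) {t : Fˣ} (ht : twistHom t = 1) :
    ψ (inr t) = q ^ 2 - q := by
  rw [← one_mul (inr t), h.mul_inr t ht, h.apply_one]

theorem apply_mul_self_conj (h : IsCandidate q ψ) (g k : HeisTorus F) :
    ψ (k * g * k⁻¹ * (k * g * k⁻¹)) = ψ (g * g) := by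
  rw [← h.conj (g * g) k]
  group

theorem apply_inl_mul_inr_of_normHom_ne_one (h : IsCandidate q ψ) {t : Fˣ} (ht : normHom t ≠ 1)
    (x : Heis F) : ψ (inl x * inr t) = 0 := by
  refine h.eq_zero_of_forall_center_mul fun w => ?_
  have norm_sub_ne_zero : 1 - (normHom t : F) ≠ 0 := sub_ne_zero.2 fun h => ht (Units.ext h.symm)
  have star_w := skewAdjoint.mem_iff.1 w.toAdd.2
  let v : Multiplicative (skewAdjoint F) := .ofAdd ⟨w.toAdd / (1 - normHom t), by
    rw [skewAdjoint.mem_iff, star_div₀, star_w, star_sub, star_one, star_normHom, neg_div]⟩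
  have center_mul_eq : Heis.center w * x = Heis.center v * x * t • (Heis.center v)⁻¹ := by
    ext
    · simp
    · simp [-RCLike.star_def, v, star_w, star_normHom]
      field_simp
      ring
  rw [← mul_assoc, ← map_mul, center_mul_eq, ← inl_mul_inl_mul_inr_mul_inv, h.conj]

theorem apply_inr_of_normHom_ne_one (h : IsCandidate q ψ) {t : Fˣ} (ht : normHom t ≠ 1) :
    ψ (inr t) = 0 := by
  simpa using h.apply_inl_mul_inr_of_normHom_ne_one ht 1

variable [FrobeniusStar q F]

theorem apply_inl_of_a_ne_zero (h : IsCandidate q ψ) {x : Heis F} (hx : x.a ≠ 0) :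
    ψ (inl x) = 0 := by
  refine h.eq_zero_of_forall_center_mul fun z => ?_
  obtain ⟨y, hy⟩ := Heis.exists_conj_eq_center_mul hx z
  rw [← map_mul, ← hy, map_mul, map_mul, map_inv, h.conj]

theorem apply_center_mul_inr_eq (h : IsCandidate q ψ) (t : Fˣ)
    {z w : Multiplicative (skewAdjoint F)} (hz : z ≠ 1) (hw : w ≠ 1) :
    ψ (inl (Heis.center z) * inr t) = ψ (inl (Heis.center w) * inr t) := by
  obtain ⟨u, hu⟩ := Heis.exists_smul_center_eq hz hw
  rw [← hu, ← inr_mul_inl_mul_inr_mul_inv, h.conj]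

theorem apply_center_mul_inr (h : IsCandidate q ψ) (t : Fˣ)
    {z : Multiplicative (skewAdjoint F)} (hz : z ≠ 1) :
    ψ (inl (Heis.center z) * inr t) = -(ψ (inr t) / (q - 1)) := by
  have three_le : (3 : ℚ) ≤ q := by exact_mod_cast FrobeniusStar.three_le q F
  have sum_eq := h.sum_center_mul (inr t)
  rw [sum_eq_add_card_sub_one_mul 1 fun w hw => h.apply_center_mul_inr_eq t hw hz,
    FrobeniusStar.natCard_multiplicative_skewAdjoint q F, map_one, map_one,
    one_mul] at sum_eq
  rw [← neg_div, eq_div_iff (by linarith)]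
  linear_combination sum_eq

theorem apply_center (h : IsCandidate q ψ) {z : Multiplicative (skewAdjoint F)} (hz : z ≠ 1) :
    ψ (inl (Heis.center z)) = -q := by
  have three_le : (3 : ℚ) ≤ q := by exact_mod_cast FrobeniusStar.three_le q F
  have apply_eq := h.apply_center_mul_inr 1 hz
  rw [map_one, mul_one, h.apply_one] at apply_eq
  rw [apply_eq, neg_inj, div_eq_iff (by linarith)]
  ring

theorem sum_sq_of_twistHom_eq_one (h : IsCandidate q ψ) {t : Fˣ} (ht : twistHom t = 1) :
    ∑ x, ψ (inl x * inr t) ^ 2 = q ^ 3 * (q - 1) := by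
  simp only [h.mul_inr t ht]
  rw [sum_heis_of_support fun x hx => by rw [h.apply_inl_of_a_ne_zero hx, sq, zero_mul],
    sum_eq_add_card_sub_one_mul 1 fun z hz => by rw [h.apply_center hz],
    FrobeniusStar.natCard_multiplicative_skewAdjoint q F, map_one, map_one,
    h.apply_one]
  ring

theorem sum_sq_of_twistHom_ne_one (h : IsCandidate q ψ) {t : Fˣ} (ht : twistHom t ≠ 1) :
    ∑ x, ψ (inl x * inr t) ^ 2 = q ^ 3 * (q - 1) * (ψ (inr t) / (q - 1)) ^ 2 := by
  have three_le : (3 : ℚ) ≤ q := by exact_mod_cast FrobeniusStar.three_le q F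
  have q_sub_ne_zero : (q : ℚ) - 1 ≠ 0 := by linarith
  rw [sum_inl_mul_inr_of_twistHom_ne_one (f := fun g => ψ g ^ 2)
      (fun g k => congrArg (· ^ 2) (h.conj g k)) ht,
    sum_eq_add_card_sub_one_mul 1 fun z hz => by rw [h.apply_center_mul_inr t hz],
    FrobeniusStar.natCard_multiplicative_skewAdjoint q F, map_one, map_one,
    one_mul]
  field_simp
  ring

theorem sum_center_sq_mul (h : IsCandidate q ψ) (g : HeisTorus F) :
    ∑ z, ψ (inl (Heis.center (z ^ 2)) * g) = 0 := by
  have coprime : (Nat.card (Multiplicative (skewAdjoint F))).Coprime 2 := by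
    rw [FrobeniusStar.natCard_multiplicative_skewAdjoint q F]
    exact (FrobeniusStar.odd F).coprime_two_right
  rw [← h.sum_center_mul g]
  exact (powCoprime coprime).sum_comp fun z => ψ (inl (Heis.center z) * g)

theorem sum_apply_mul_self_of_normHom_ne_neg_one (h : IsCandidate q ψ) {t : Fˣ}
    (ht : normHom t ≠ -1) : ∑ x, ψ (inl x * inr t * (inl x * inr t)) = 0 := by
  simp only [inl_mul_inr_mul_self]
  by_cases norm_eq_one : normHom t = 1
  · have smul_center (z) : t • (Heis.center z : Heis F) = Heis.center z := by
      ext <;> simp [norm_eq_one]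
    have center_mul_smul (z) :
        (Heis.center z : Heis F) * t • Heis.center z = Heis.center (z ^ 2) := by
      rw [smul_center, sq, map_mul]
    by_cases twist_eq_one : twistHom t = 1
    · rw [sum_heis_of_support fun x hx => ?_]
      · simp only [center_mul_smul, h.sum_center_sq_mul]
      · rw [h.mul_inr _ (by rw [map_mul, twist_eq_one, one_mul]),
          Heis.smul_eq_self_of_twistHom_eq_one twist_eq_one]
        exact h.apply_inl_of_a_ne_zero (by simpa [← two_mul, NeZero.ne (2 : F)] using hx)
    · simp only [← inl_mul_inr_mul_self]
      rw [sum_inl_mul_inr_of_twistHom_ne_one (f := fun g => ψ (g * g)) h.apply_mul_self_conj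
        twist_eq_one]
      simp only [inl_mul_inr_mul_self, center_mul_smul, h.sum_center_sq_mul, mul_zero]
  · refine Finset.sum_eq_zero fun x _ => h.apply_inl_mul_inr_of_normHom_ne_one ?_ _
    rw [map_mul, ne_eq, Units.ext_iff, Units.val_mul, Units.val_one, mul_self_eq_one_iff, not_or]
    exact ⟨fun h => norm_eq_one (Units.ext h), fun h => ht (Units.ext h)⟩

theorem sum_apply_mul_self_of_normHom_eq_neg_one (h : IsCandidate q ψ) {t : Fˣ}
    (ht : normHom t = -1) :
    ∑ x, ψ (inl x * inr t * (inl x * inr t)) = q ^ 3 * ψ (inr (t * t)) := by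
  have twist_ne_one : twistHom t ≠ 1 := fun h =>
    FrobeniusStar.neg_one_ne_one q F (ht ▸ normHom_eq_one_of_twistHom_eq_one h)
  have center_mul_smul (z) : (Heis.center z : Heis F) * t • Heis.center z = 1 := by
    ext <;> simp [ht]
  rw [sum_inl_mul_inr_of_twistHom_ne_one (f := fun g => ψ (g * g)) h.apply_mul_self_conj
    twist_ne_one]
  simp only [inl_mul_inr_mul_self, center_mul_smul, map_one, one_mul, Finset.sum_const,
    Finset.card_univ, ← Nat.card_eq_fintype_card,
    FrobeniusStar.natCard_multiplicative_skewAdjoint q F, nsmul_eq_mul]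
  ring

theorem sum_regularTorus_sq (h : IsCandidate q ψ) :
    ∑ t ∈ regularTorus F, (ψ (inr t) / (q - 1)) ^ 2 =
      (q + 1 - Nat.card (twistHom : Fˣ →* Fˣ).ker : ℚ) := by
  have three_le : (3 : ℚ) ≤ q := by exact_mod_cast FrobeniusStar.three_le q F
  have factor_ne_zero : (q : ℚ) ^ 3 * (q - 1) ≠ 0 :=
    mul_ne_zero (pow_ne_zero 3 (by linarith)) (by linarith)
  have sum_eq := h.sum_sq
  rw [sum_heisTorus, natCard_heisTorus q, sum_eq_sum_regularTorus_add
      (fun t ht => Finset.sum_eq_zero fun x _ => by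
        rw [h.apply_inl_mul_inr_of_normHom_ne_one ht, sq, zero_mul])
      (fun t ht => h.sum_sq_of_twistHom_eq_one ht),
    Finset.sum_congr rfl fun t ht => h.sum_sq_of_twistHom_ne_one (mem_regularTorus.1 ht).2,
    ← Finset.mul_sum] at sum_eq
  apply mul_left_cancel₀ factor_ne_zero
  linear_combination sum_eq

theorem sum_nonsquareTorus (h : IsCandidate q ψ) :
    2 * ∑ t ∈ nonsquareTorus q F, ψ (inr t) / (q - 1) = (q + 1 : ℚ) := by
  have three_le : (3 : ℚ) ≤ q := by exact_mod_cast FrobeniusStar.three_le q F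
  have sum_eq := h.sum_mul_self
  rw [sum_heisTorus, natCard_heisTorus q, ← Finset.sum_filter_add_sum_filter_not _
      (fun t : Fˣ => normHom t = -1),
    Finset.sum_eq_zero fun t ht =>
      h.sum_apply_mul_self_of_normHom_ne_neg_one (Finset.mem_filter.1 ht).2, add_zero,
    Finset.sum_congr rfl fun t ht =>
      h.sum_apply_mul_self_of_normHom_eq_neg_one (Finset.mem_filter.1 ht).2, ← Finset.mul_sum,
    sum_mul_self_of_normHom_eq_neg_one fun t => ψ (inr t)] at sum_eq
  rw [← Finset.sum_div, mul_div_assoc', mul_left_cancel₀ (pow_ne_zero 3 (by linarith)) sum_eq,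
    div_eq_iff (by linarith)]
  ring

theorem exists_sum_regularTorus (h : IsCandidate q ψ) : ∃ r : ℕ,
    ∑ t ∈ regularTorus F, ψ (inr t) / (q - 1) =
      ((q + 1) * r - Nat.card (twistHom : Fˣ →* Fˣ).ker * q : ℚ) := by
  have three_le : (3 : ℚ) ≤ q := by exact_mod_cast FrobeniusStar.three_le q F
  obtain ⟨r, sum_eq⟩ := h.exists_sum_inr
  refine ⟨r, ?_⟩
  rw [sum_eq_sum_regularTorus_add (fun t => h.apply_inr_of_normHom_ne_one)
    (fun t => h.apply_inr_of_twistHom_eq_one)] at sum_eq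
  rw [← Finset.sum_div, div_eq_iff (by linarith)]
  linear_combination sum_eq

theorem apply_inr_of_mem_regularTorus (h : IsCandidate q ψ) {t : Fˣ} (ht : t ∈ regularTorus F) :
    ψ (inr t) / (q - 1) = if t ∈ nonsquareTorus q F then 1 else -1 := by
  obtain ⟨r, sum_eq⟩ := h.exists_sum_regularTorus
  refine eq_ite_of_sum_sq (y := fun t => ψ (inr t) / (q - 1)) (N := q + 1)
    (d := Nat.card (twistHom : Fˣ →* Fˣ).ker) (r := r) nonsquareTorus_subset q.succ_pos
    Nat.card_pos ?_ ?_ ?_ ?_ ht <;> push_cast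
  · exact card_regularTorus
  · exact h.sum_nonsquareTorus
  · exact h.sum_regularTorus_sq
  · linear_combination sum_eq

theorem eq_of_normHom_eq_one {ψ' : HeisTorus F → ℚ} (h : IsCandidate q ψ) (h' : IsCandidate q ψ')
    {t : Fˣ} (ht : t ∈ regularTorus F) (x : Heis F) : ψ (inl x * inr t) = ψ' (inl x * inr t) := by
  have three_le : (3 : ℚ) ≤ q := by exact_mod_cast FrobeniusStar.three_le q F
  have apply_inr_eq : ψ (inr t) = ψ' (inr t) := (div_left_inj' (by linarith)).1 <|
    (h.apply_inr_of_mem_regularTorus ht).trans (h'.apply_inr_of_mem_regularTorus ht).symm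
  obtain ⟨⟨a, z⟩, rfl⟩ :=
    (bijective_lift_mul_center_mul_smul_inv (mem_regularTorus.1 ht).2).surjective x
  simp only [← inl_mul_inl_mul_inr_mul_inv, h.conj, h'.conj]
  obtain rfl | hz := eq_or_ne z 1
  · simpa using apply_inr_eq
  · rw [h.apply_center_mul_inr t hz, h'.apply_center_mul_inr t hz, apply_inr_eq]

theorem unique {ψ' : HeisTorus F → ℚ} (h : IsCandidate q ψ) (h' : IsCandidate q ψ') : ψ = ψ' := by
  funext g
  rw [← SemidirectProduct.inl_left_mul_inr_right g]
  generalize g.left = x, g.right = t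
  by_cases norm_eq_one : normHom t = 1
  · by_cases twist_eq_one : twistHom t = 1
    · rw [h.mul_inr t twist_eq_one, h'.mul_inr t twist_eq_one]
      by_cases hx : x.a = 0
      · obtain ⟨z, rfl⟩ := Heis.exists_center_eq hx
        obtain rfl | hz := eq_or_ne z 1
        · rw [map_one, map_one, h.apply_one, h'.apply_one]
        · rw [h.apply_center hz, h'.apply_center hz]
      · rw [h.apply_inl_of_a_ne_zero hx, h'.apply_inl_of_a_ne_zero hx]
    · exact h.eq_of_normHom_eq_one h' (mem_regularTorus.2 ⟨norm_eq_one, twist_eq_one⟩) x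
  · rw [h.apply_inl_mul_inr_of_normHom_ne_one norm_eq_one,
      h'.apply_inl_mul_inr_of_normHom_ne_one norm_eq_one]

end IsCandidate

end Candidate

section IrreducibleHeisTorus

open SemidirectProduct Representation

variable {F : Type*} [Field F] [StarRing F]

theorem inr_mem_center {t : Fˣ} (ht : twistHom t = 1) :
    (inr t : HeisTorus F) ∈ Subgroup.center (HeisTorus F) := by
  refine Subgroup.mem_center_iff.2 fun g => ?_
  rw [← inl_left_mul_inr_right g, ← mul_assoc (inr t), inr_mul_inl,
    Heis.smul_eq_self_of_twistHom_eq_one ht, mul_assoc, mul_assoc, ← map_mul, ← map_mul, mul_comm]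

instance normal_range_center :
    ((inl : Heis F →* HeisTorus F).comp Heis.center).range.Normal := by
  refine ⟨?_⟩
  rintro _ ⟨z, rfl⟩ g
  have conj_eq : g * inl (Heis.center z) * g⁻¹ =
      inl (g.left * g.right • Heis.center z * g.left⁻¹) := by
    nth_rw 1 2 [← inl_left_mul_inr_right g]
    rw [mul_assoc (inl g.left), inr_mul_inl]
    simp only [_root_.mul_inv_rev, map_mul, map_inv]
    group
  obtain ⟨w, hw⟩ := Heis.exists_center_eq
    (x := g.left * g.right • Heis.center z * g.left⁻¹) (by simp)
  exact ⟨w, by rw [MonoidHom.comp_apply, MonoidHom.comp_apply, hw, conj_eq]⟩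

variable {V : Type*} [AddCommGroup V] [Module ℂ V] (ρ : Representation ℂ (HeisTorus F) V)

theorem sum_character_center_mul_eq_zero [Finite F]
    (h : ∑ z, ρ (inl (Heis.center z)) = 0) (g : HeisTorus F) :
    ∑ z, ρ.character (inl (Heis.center z) * g) = 0 := by
  simp only [Representation.character, map_mul, ← map_sum, ← Finset.sum_mul, h, zero_mul, map_zero]

variable [Fintype F]

theorem character_inr_eq_zero (q : ℕ) [FrobeniusStar q F]
    (center_trivial : ∀ z, ρ (inl (Heis.center z)) = 1)
    (sum_inl : ∑ x, ρ (inl x) = 0) {t : Fˣ} (ht : twistHom t ≠ 1) : ρ.character (inr t) = 0 := by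
  have three_le := FrobeniusStar.three_le q F
  have sum_eq := sum_inl_mul_inr_of_twistHom_ne_one (q := q) (f := ρ.character)
    (fun g h => ρ.char_conj g h) ht
  simp only [Representation.character, map_mul, center_trivial, one_mul, Finset.sum_const,
    ← map_sum, ← Finset.sum_mul, sum_inl, zero_mul, map_zero, nsmul_eq_mul, zero_eq_mul,
    Finset.card_univ] at sum_eq
  simpa [Representation.character, (zero_lt_three.trans_le three_le).ne'] using sum_eq

theorem exists_sum_character_inr_eq [DecidableEq F] {q : ℕ} [FrobeniusStar q F]
    [FiniteDimensional ℂ V] :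
    ∃ r : ℕ, ∑ t, ρ.character (inr t) = (q ^ 2 - 1) * r := by
  obtain ⟨r, sum_eq⟩ := exists_sum_character_eq (ρ.comp (inr : Fˣ →* HeisTorus F))
  have three_le := FrobeniusStar.three_le q F
  rw [FrobeniusStar.natCard_units q F, ← Nat.sq_sub_sq, one_pow,
    Nat.cast_sub (Nat.one_le_pow _ _ (by omega))] at sum_eq
  push_cast at sum_eq
  exact ⟨r, sum_eq⟩

theorem sum_character_inr_eq [DecidableEq F] (q : ℕ) [FrobeniusStar q F]
    [FiniteDimensional ℂ V] (apply_inr : ∀ t, twistHom t = 1 → ρ (inr t) = 1)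
    (center_trivial : ∀ z, ρ (inl (Heis.center z)) = 1) (sum_inl : ∑ x, ρ (inl x) = 0) :
    ∑ t, ρ.character (inr t) = Nat.card (twistHom : Fˣ →* Fˣ).ker * Module.finrank ℂ V := by
  rw [← Finset.sum_filter_add_sum_filter_not _ (fun t : Fˣ => twistHom t = 1),
    Finset.sum_eq_zero fun t ht => character_inr_eq_zero ρ q center_trivial sum_inl
      (Finset.mem_filter.1 ht).2, add_zero,
    Finset.sum_congr rfl fun t ht => by
      rw [Representation.character, apply_inr t (Finset.mem_filter.1 ht).2, LinearMap.trace_one],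
    Finset.sum_const, nsmul_eq_mul, Nat.card_eq_fintype_card, Fintype.card_subtype]
  simp only [MonoidHom.mem_ker]

theorem not_forall_apply_center_eq_one {q : ℕ} [FrobeniusStar q F] [FiniteDimensional ℂ V]
    [ρ.IsIrreducible] (apply_inr : ∀ t, twistHom t = 1 → ρ (inr t) = 1)
    (finrank_eq : Module.finrank ℂ V = q * (q - 1)) :
    ¬ ∀ z, ρ (inl (Heis.center z)) = 1 := by
  classical
  intro center_trivial
  have three_le := FrobeniusStar.three_le q F
  have : (inl : Heis F →* HeisTorus F).range.Normal := by
    rw [range_inl_eq_ker_rightHom]; infer_instance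
  rcases eq_one_or_sum_eq_zero_of_normal_range ρ (inl : Heis F →* HeisTorus F) with h_one | h_sum
  · have finrank_eq_one := finrank_eq_one_of_forall_commute ρ fun g₁ g₂ => by
      rw [← inl_left_mul_inr_right g₁, ← inl_left_mul_inr_right g₂, map_mul, map_mul, h_one, h_one,
        one_mul, one_mul, Commute, SemiconjBy, ← map_mul, ← map_mul, ← map_mul, ← map_mul, mul_comm]
    rw [finrank_eq, mul_eq_one] at finrank_eq_one
    omega
  · obtain ⟨r, hr⟩ := exists_sum_character_eq (ρ.comp (inr : Fˣ →* HeisTorus F))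
    have sum_eq := sum_character_inr_eq ρ q apply_inr center_trivial h_sum
    rw [finrank_eq] at sum_eq
    have card_ker_mul : Nat.card (twistHom : Fˣ →* Fˣ).ker * q = (q + 1) * r := by
      have card_mul_eq := sum_eq.symm.trans hr
      rw [FrobeniusStar.natCard_units q F] at card_mul_eq
      norm_cast at card_mul_eq
      refine Nat.eq_of_mul_eq_mul_right (show 0 < q - 1 by omega) ?_
      linear_combination card_mul_eq
    have dvd_card_ker : q + 1 ∣ Nat.card (twistHom : Fˣ →* Fˣ).ker :=
      (Nat.coprime_self_add_left.2 (by simp)).dvd_of_dvd_mul_right ⟨r, card_ker_mul⟩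
    have := Nat.le_of_dvd Nat.card_pos dvd_card_ker
    have := natCard_ker_twistHom_le (F := F)
    omega

end IrreducibleHeisTorus

section IrreducibleMatrixHeisTorus

open SemidirectProduct Representation

variable {F : Type} [Field F] [StarRing F] {n : ℕ} {ρ : HeisTorus F →* GL (Fin n) ℂ}

theorem toRep_inr_eq_one (irreducible : IsIrredRep ρ) (rational : IsRationalChar (charOf ρ))
    {t : Fˣ} (ht : twistHom t = 1) : toRep ρ (inr t) = 1 :=
  have := (isIrredRep_iff_isIrreducible ρ).1 irreducible
  apply_eq_one_of_mem_center_of_odd_pow_eq_one _ (inr_mem_center ht) (by decide : Odd 3)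
    (by rw [← map_pow, pow_three_eq_one_of_twistHom_eq_one ht, map_one])
    (character_toRep ρ ▸ rational _)

variable {q : ℕ} [Fintype F] [FrobeniusStar q F]

theorem sum_toRep_center_eq_zero (irreducible : IsIrredRep ρ)
    (rational : IsRationalChar (charOf ρ)) (degree : charOf ρ 1 = (q ^ 2 - q : ℕ)) :
    ∑ z, toRep ρ (inl (Heis.center z)) = 0 := by
  have := (isIrredRep_iff_isIrreducible ρ).1 irreducible
  have finrank_eq : Module.finrank ℂ (Fin n → ℂ) = q * (q - 1) := by
    rw [charOf_one, Nat.cast_inj] at degree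
    rw [Module.finrank_fin_fun, degree, sq, Nat.mul_sub_one]
  exact (eq_one_or_sum_eq_zero_of_normal_range (toRep ρ) (inl.comp Heis.center)).resolve_left
    (not_forall_apply_center_eq_one (toRep ρ)
      (fun _ => toRep_inr_eq_one irreducible rational) finrank_eq)

theorem exists_isCandidate [DecidableEq F] (irreducible : IsIrredRep ρ)
    (rational : IsRationalChar (charOf ρ)) (degree : charOf ρ 1 = (q ^ 2 - q : ℕ))
    (indicator : FSind (charOf ρ) = 1) :
    ∃ ψ : HeisTorus F → ℚ, (∀ g, charOf ρ g = ψ g) ∧ IsCandidate q ψ := by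
  choose ψ hψ using id rational
  have character_eq (g) : (toRep ρ).character g = ψ g := by rw [character_toRep, hψ]
  refine ⟨ψ, hψ, ?conj, ?sum_center_mul, ?mul_inr, ?apply_one, sum_sq_of_charOf_eq irreducible hψ,
    ?sum_mul_self, ?exists_sum_inr⟩
  case conj =>
    exact fun g h => by exact_mod_cast (hψ _).symm.trans ((charOf_conj ρ g h).trans (hψ g))
  case sum_center_mul =>
    intro g
    have sum_eq := sum_character_center_mul_eq_zero _
      (sum_toRep_center_eq_zero irreducible rational degree) g
    simp only [character_eq] at sum_eq
    exact_mod_cast sum_eq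
  case mul_inr =>
    intro t ht g
    have apply_eq : (toRep ρ).character (g * inr t) = (toRep ρ).character g := by
      rw [Representation.character, Representation.character, map_mul,
        toRep_inr_eq_one irreducible rational ht, mul_one]
    simpa only [character_eq, Rat.cast_inj] using apply_eq
  case apply_one =>
    rw [hψ, Nat.cast_sub (Nat.le_self_pow two_ne_zero q)] at degree
    exact_mod_cast degree
  case sum_mul_self =>
    simp only [FSind_eq_one_iff, hψ] at indicator
    exact_mod_cast indicator
  case exists_sum_inr =>
    obtain ⟨r, hr⟩ := exists_sum_character_inr_eq (q := q) (toRep ρ)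
    simp only [character_eq] at hr
    exact ⟨r, by exact_mod_cast hr⟩

end IrreducibleMatrixHeisTorus

section SignCharacter

variable (F : Type*) [Field F] [Fintype F] [DecidableEq F]

/-- The quadratic character of `F` with rational values. -/
def signChar : MulChar F ℚ := (quadraticChar F).ringHomComp (Int.castRingHom ℚ)

variable {F}

theorem signChar_apply (x : F) : signChar F x = (quadraticChar F x : ℚ) := rfl

theorem signChar_mul_self {x : F} (hx : x ≠ 0) : signChar F x * signChar F x = 1 := by
  rw [signChar_apply, ← Int.cast_mul, ← sq, quadraticChar_sq_one hx, Int.cast_one]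

theorem signChar_inv (x : F) : signChar F x⁻¹ = signChar F x := by
  rw [← MulChar.inv_apply', signChar, ((quadraticChar_isQuadratic F).comp _).inv]

/-- The value of the quadratic character at the nonzero `z` with `star z = -z`. -/
def skewSign (q : ℕ) : ℚ := (-1) ^ ((q + 1) / 2)

theorem skewSign_mul_self (q : ℕ) : skewSign q * skewSign q = 1 := by
  rw [skewSign, ← mul_pow, neg_one_mul, neg_neg, one_pow]

variable [StarRing F] {q : ℕ}

theorem sum_signChar [FrobeniusStar q F] : ∑ x, signChar F x = 0 := by
  simp only [signChar_apply]
  exact_mod_cast quadraticChar_sum_zero (FrobeniusStar.ringChar_ne_two q F)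

theorem signChar_normHom [FrobeniusStar q F] (t : Fˣ) : signChar F (normHom t) = 1 := by
  rw [FrobeniusStar.normHom_eq_pow q, ← FrobeniusStar.half_mul_two q F, pow_mul, sq,
    Units.val_mul, map_mul, signChar_mul_self (Units.ne_zero _)]

theorem signChar_eq_one_of_star_eq [FrobeniusStar q F] {x : F} (hx : x ≠ 0) (h : star x = x) :
    signChar F x = 1 := by
  obtain ⟨t, ht⟩ := FrobeniusStar.exists_normHom_eq (x := Units.mk0 x hx) h
  rw [← Units.val_mk0 hx, ← ht, signChar_normHom]

theorem signChar_star [FrobeniusStar q F] (x : F) : signChar F (star x) = signChar F x := by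
  obtain rfl | hx := eq_or_ne x 0
  · rw [star_zero]
  · have h := signChar_normHom (Units.mk0 x hx)
    rw [coe_normHom, Units.val_mk0, map_mul] at h
    linear_combination signChar F (star x) * (-signChar_mul_self hx) + signChar F x * h

theorem signChar_eq_skewSign [FrobeniusStar q F] {z : F} (hz : z ≠ 0) (h : star z = -z) :
    signChar F z = skewSign q := by
  obtain ⟨m, hm⟩ := FrobeniusStar.odd F (q := q)
  have ringChar_ne_two := FrobeniusStar.ringChar_ne_two q F
  have pow_eq : z ^ (2 * m) = -1 := by
    rw [FrobeniusStar.star_eq_pow, hm, pow_succ, ← neg_one_mul z] at h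
    exact mul_right_cancel₀ hz h
  have half_card : Fintype.card F / 2 = 2 * m * (m + 1) := by
    rw [FrobeniusStar.card_eq (F := F), hm,
      show (2 * m + 1) ^ 2 = 2 * (2 * m * (m + 1)) + 1 by ring]
    omega
  have cast_eq : ((quadraticChar F z : ℤ) : F) = ((-1) ^ (m + 1) : ℤ) := by
    rw [quadraticChar_eq_pow_of_char_ne_two' ringChar_ne_two, half_card, pow_mul, pow_eq]
    push_cast
    rfl
  have eq := Int.cast_injOn_of_ringChar_ne_two ringChar_ne_two
    (by simpa using Or.inr (quadraticChar_dichotomy hz))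
    (by simpa using neg_one_pow_eq_or ℤ (m + 1)) cast_eq
  rw [signChar_apply, eq, skewSign, hm, show (2 * m + 1 + 1) / 2 = m + 1 by omega]
  push_cast
  rfl

theorem sum_signChar_skewAdjoint [FrobeniusStar q F] :
    ∑ z : skewAdjoint F, signChar F z = skewSign q * (q - 1) := by
  rw [sum_eq_add_card_sub_one_mul (c := skewSign q) (0 : skewAdjoint F) fun z hz =>
    signChar_eq_skewSign (by simpa using hz) z.2, FrobeniusStar.natCard_skewAdjoint q]
  simp [MulChar.map_zero, mul_comm]

end SignCharacter

section SignSums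

variable {F : Type*} [Field F] [Fintype F] [StarRing F] {q : ℕ} [DecidableEq F]

theorem sum_signChar_add_eq_sum_signChar_add [FrobeniusStar q F] {b b' : F} (hb : star b ≠ -b)
    (hb' : star b' ≠ -b') :
    ∑ z : skewAdjoint F, signChar F (z + b) = ∑ z : skewAdjoint F, signChar F (z + b') := by
  have trace_ne_zero {x : F} (hx : star x ≠ -x) : x + star x ≠ 0 := fun h =>
    hx (eq_neg_of_add_eq_zero_right h)
  let c := (b' + star b') / (b + star b)
  have c_ne_zero : c ≠ 0 := div_ne_zero (trace_ne_zero hb') (trace_ne_zero hb)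
  have c_mul : c * (b + star b) = b' + star b' := div_mul_cancel₀ _ (trace_ne_zero hb)
  have star_c : star c = c := by
    simp only [c, star_div₀, star_add, star_star, add_comm]
  let f (z : skewAdjoint F) : skewAdjoint F := ⟨c * (z + b) - b', by
    rw [skewAdjoint.mem_iff, star_sub, star_mul', star_add, star_c, skewAdjoint.mem_iff.1 z.2]
    linear_combination c_mul⟩
  have f_injective : Function.Injective f := fun z w h => Subtype.ext <|
    add_right_cancel (mul_left_cancel₀ c_ne_zero (sub_left_injective (congrArg Subtype.val h)))
  refine Fintype.sum_bijective f f_injective.bijective_of_finite _ _ fun z => ?_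
  rw [sub_add_cancel, map_mul, signChar_eq_one_of_star_eq c_ne_zero star_c, one_mul]

theorem sum_sum_signChar_add [FrobeniusStar q F] :
    ∑ b, ∑ z : skewAdjoint F, signChar F (z + b) = 0 := by
  rw [Finset.sum_comm]
  refine Finset.sum_eq_zero fun z _ => ?_
  exact (Equiv.sum_comp (Equiv.addLeft (z : F)) (signChar F)).trans sum_signChar

theorem sum_signChar_add_of_mem_skewAdjoint [FrobeniusStar q F] {b : F} (hb : star b = -b) :
    ∑ z : skewAdjoint F, signChar F (z + b) = skewSign q * (q - 1) := by
  rw [← sum_signChar_skewAdjoint (F := F)]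
  exact Fintype.sum_equiv (Equiv.addRight ⟨b, hb⟩) _ _ fun _ => rfl

/- The sum depends only on whether `b` is skew, and its average over all `b` vanishes. -/
theorem sum_signChar_add_of_notMem_skewAdjoint [FrobeniusStar q F] {b : F} (hb : star b ≠ -b) :
    ∑ z : skewAdjoint F, signChar F (z + b) = -skewSign q := by
  have three_le : (3 : ℚ) ≤ q := by exact_mod_cast FrobeniusStar.three_le q F
  have total := sum_sum_signChar_add (F := F)
  have card_skew : (({x | star x = -x} : Finset F).card : ℚ) = q := by
    rw [← Fintype.card_subtype, ← Nat.card_eq_fintype_card]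
    exact_mod_cast FrobeniusStar.natCard_skewAdjoint q F
  have card_split := Finset.card_filter_add_card_filter_not (s := .univ) fun x : F => star x = -x
  rw [Finset.card_univ, FrobeniusStar.card_eq (F := F), ← Nat.cast_inj (R := ℚ), Nat.cast_add,
    card_skew, Nat.cast_pow] at card_split
  rw [← Finset.sum_filter_add_sum_filter_not _ fun x : F => star x = -x,
    Finset.sum_congr rfl fun x hx =>
      sum_signChar_add_of_mem_skewAdjoint (Finset.mem_filter.1 hx).2,
    Finset.sum_congr rfl fun x hx =>
      sum_signChar_add_eq_sum_signChar_add (Finset.mem_filter.1 hx).2 hb,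
    Finset.sum_const, Finset.sum_const, nsmul_eq_mul, nsmul_eq_mul, card_skew,
    eq_sub_of_add_eq' card_split] at total
  have factor_ne_zero : (q : ℚ) * (q - 1) ≠ 0 := by nlinarith
  apply mul_left_cancel₀ factor_ne_zero
  linear_combination total

theorem sum_signChar_center_mul [FrobeniusStar q F] (x : Heis F) :
    ∑ z, signChar F (Heis.center z * x).b =
      if x.a = 0 then skewSign q * (q - 1) else -skewSign q := by
  have star_b_eq_iff : star x.b = -x.b ↔ x.a = 0 := by
    rw [x.star_b, sub_eq_self, mul_eq_zero, star_eq_zero, or_self]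
  have sum_eq : ∑ z, signChar F (Heis.center z * x).b =
      ∑ z : skewAdjoint F, signChar F (z + x.b) :=
    Fintype.sum_equiv Multiplicative.toAdd _ _ fun z => by simp
  rw [sum_eq]
  split_ifs with hx
  · exact sum_signChar_add_of_mem_skewAdjoint (star_b_eq_iff.2 hx)
  · exact sum_signChar_add_of_notMem_skewAdjoint (mt star_b_eq_iff.1 hx)

theorem sum_signChar_b [FrobeniusStar q F] :
    ∑ x : Heis F, signChar F x.b = -skewSign q * (q * (q - 1)) := by
  have sum_fibre (a : F) : ∑ z, signChar F (Heis.coordEquiv (a, z)).b =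
      if a = 0 then skewSign q * (q - 1) else -skewSign q := sum_signChar_center_mul (Heis.lift a)
  rw [← Equiv.sum_comp Heis.coordEquiv, Fintype.sum_prod_type]
  simp only [sum_fibre]
  rw [sum_eq_add_card_sub_one_mul (c := -skewSign q) (0 : F) fun a ha => if_neg ha, if_pos rfl,
    Nat.card_eq_fintype_card, FrobeniusStar.card_eq (F := F)]
  push_cast
  ring

end SignSums

section Inversion

namespace Heis

variable {F : Type*} [Field F] [StarRing F]

theorem a_eq_zero_of_b_eq_zero {x : Heis F} (hx : x.b = 0) : x.a = 0 := by
  simpa [hx] using x.add_star_add_mul_star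

theorem b_ne_zero {x : Heis F} (hx : x ≠ 1) : x.b ≠ 0 := fun h =>
  hx (Heis.ext (a_eq_zero_of_b_eq_zero h) h)

/-- The inversion of the Heisenberg group induced by the antidiagonal element of the unitary group;
it makes no sense geometrically at the identity, which division by zero leaves fixed. -/
def inversion : Heis F ≃ Heis F where
  toFun x := ⟨x.a / star x.b, (star x.b)⁻¹, by
    obtain hx | hx := eq_or_ne x.b 0
    · simp [hx, a_eq_zero_of_b_eq_zero hx]
    · have star_ne_zero : star x.b ≠ 0 := star_ne_zero.2 hx
      rw [star_inv₀, star_div₀, star_star]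
      field_simp
      linear_combination x.add_star_add_mul_star⟩
  invFun x := ⟨x.a / x.b, (star x.b)⁻¹, by
    obtain hx | hx := eq_or_ne x.b 0
    · simp [hx]
    · have star_ne_zero : star x.b ≠ 0 := star_ne_zero.2 hx
      rw [star_inv₀, star_div₀, star_star]
      field_simp
      linear_combination x.add_star_add_mul_star⟩
  left_inv x := by
    obtain hx | hx := eq_or_ne x.b 0
    · ext <;> simp [hx, a_eq_zero_of_b_eq_zero hx]
    · ext <;> simp [hx]
  right_inv x := by
    obtain hx | hx := eq_or_ne x.b 0
    · ext <;> simp [hx, a_eq_zero_of_b_eq_zero hx]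
    · ext <;> simp [hx]

@[simp] theorem inversion_a (x : Heis F) : (inversion x).a = x.a / star x.b := rfl

@[simp] theorem inversion_b (x : Heis F) : (inversion x).b = (star x.b)⁻¹ := rfl

@[simp] theorem inversion_symm_a (x : Heis F) : (inversion.symm x).a = x.a / x.b := rfl

@[simp] theorem inversion_symm_b (x : Heis F) : (inversion.symm x).b = (star x.b)⁻¹ := rfl

theorem b_mul_inversion_inv_mul_b {v y : Heis F} (hv : v ≠ 1) (hy : y ≠ 1) :
    v.b * ((inversion v)⁻¹ * y).b = y.b * (v * (inversion.symm y)⁻¹).b := by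
  have v_b_ne_zero := b_ne_zero hv
  have y_b_ne_zero := b_ne_zero hy
  simp only [mul_b, inv_a, inv_b, inversion_a, inversion_b, inversion_symm_a, inversion_symm_b,
    star_neg, star_div₀, star_inv₀, star_star]
  field_simp
  ring

end Heis

end Inversion

section Convolution

variable {F : Type*} [Field F] [Fintype F] [StarRing F] {q : ℕ} [DecidableEq F]

theorem sum_signChar_b_mul_self [FrobeniusStar q F] :
    ∑ x : Heis F, signChar F x.b * signChar F x.b = q ^ 3 - 1 := by
  rw [sum_eq_add_card_sub_one_mul (1 : Heis F) fun x hx => signChar_mul_self (Heis.b_ne_zero hx),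
    Heis.one_b, MulChar.map_zero, Heis.natCard_eq q]
  push_cast
  ring

theorem signChar_inversion_mul_signChar [FrobeniusStar q F] {y : Heis F} (hy : y ≠ 1)
    (v : Heis F) :
    signChar F (Heis.inversion v).b * signChar F ((Heis.inversion v)⁻¹ * y).b =
      signChar F y.b * signChar F (v * (Heis.inversion.symm y)⁻¹).b - if v = 1 then 1 else 0 := by
  split_ifs with hv
  · subst hv
    simp [MulChar.map_zero, signChar_inv, signChar_mul_self (Heis.b_ne_zero hy)]
  · rw [Heis.inversion_b, signChar_inv, signChar_star, ← map_mul, ← map_mul, sub_zero,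
      Heis.b_mul_inversion_inv_mul_b hv hy]

/- The inversion turns the convolution into a plain sum over the group. -/
theorem sum_signChar_b_mul_signChar_inv_mul_b [FrobeniusStar q F] {y : Heis F} (hy : y ≠ 1) :
    ∑ x : Heis F, signChar F x.b * signChar F (x⁻¹ * y).b =
      -skewSign q * (q * (q - 1)) * signChar F y.b - 1 := by
  rw [← Equiv.sum_comp Heis.inversion]
  simp only [signChar_inversion_mul_signChar hy, Finset.sum_sub_distrib, ← Finset.mul_sum,
    Finset.sum_ite_eq', Finset.mem_univ, if_true]
  have sum_mul_right := Equiv.sum_comp (Equiv.mulRight (Heis.inversion.symm y)⁻¹)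
    fun x : Heis F => signChar F x.b
  simp only [Equiv.coe_mulRight] at sum_mul_right
  rw [sum_mul_right, sum_signChar_b]
  ring

end Convolution

section Projection

variable {F : Type*} [Field F] [StarRing F] {q : ℕ}

theorem sum_ite_center_mul_eq [Finite F] [DecidableEq F] (x y : Heis F) :
    ∑ z, (if Heis.center z * x = y then 1 else 0 : ℚ) = if x.a = y.a then 1 else 0 := by
  split_ifs with h
  · obtain ⟨z₀, hz₀⟩ := Heis.exists_center_eq (x := y * x⁻¹) (by simp [h])
    have iff_eq (z) : Heis.center z * x = y ↔ z = z₀ := by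
      rw [← eq_mul_inv_iff_mul_eq, ← hz₀, Heis.center_injective.eq_iff]
    simp [iff_eq]
  · refine Finset.sum_eq_zero fun z _ => if_neg fun hz => h ?_
    simpa using congrArg Heis.a hz

variable [Fintype F]

theorem ones_mul_ones [FrobeniusStar q F] :
    (of 1 * of 1 : Matrix (Heis F) (Heis F) ℚ) = (q ^ 3 : ℚ) • of 1 := by
  ext x y
  have card_eq := Heis.natCard_eq (F := F) q
  rw [Nat.card_eq_fintype_card] at card_eq
  simp [Matrix.mul_apply, card_eq]

variable [DecidableEq F]

variable (F) in
/-- The Cayley matrix on the Heisenberg group with entries `signChar (x⁻¹ * y).b`. -/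
def signMatrix : Matrix (Heis F) (Heis F) ℚ := of fun x y => signChar F (x⁻¹ * y).b

variable (F) in
/-- The matrix of the projection of the functions on the Heisenberg group onto the constituent of
degree `q ^ 2 - q` on which the centre has no invariants. -/
def heisProj (q : ℕ) : Matrix (Heis F) (Heis F) ℚ :=
  (q + 1 : ℚ)⁻¹ • (1 - (skewSign q / q) • signMatrix F - ((q : ℚ) ^ 2)⁻¹ • of 1)

theorem signMatrix_apply (x y : Heis F) : signMatrix F x y = signChar F (x⁻¹ * y).b := rfl

theorem signMatrix_apply_self (x : Heis F) : signMatrix F x x = 0 := by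
  rw [signMatrix_apply, inv_mul_cancel, Heis.one_b, MulChar.map_zero]

theorem heisProj_apply (x y : Heis F) :
    heisProj F q x y =
      (q + 1 : ℚ)⁻¹ * ((if x = y then 1 else 0) - skewSign q / q * signMatrix F x y -
        ((q : ℚ) ^ 2)⁻¹) := by
  simp [heisProj, Matrix.one_apply]

theorem signMatrix_mul_ones [FrobeniusStar q F] :
    signMatrix F * of 1 = (-skewSign q * (q * (q - 1))) • of 1 := by
  ext x y
  have sum_row := Equiv.sum_comp (Equiv.mulLeft x⁻¹) fun w : Heis F => signChar F w.b
  simp only [Equiv.coe_mulLeft] at sum_row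
  simp only [Matrix.mul_apply, signMatrix_apply, of_apply, Pi.one_apply, mul_one, sum_row,
    sum_signChar_b, Matrix.smul_apply, smul_eq_mul]

theorem ones_mul_signMatrix [FrobeniusStar q F] :
    of 1 * signMatrix F = (-skewSign q * (q * (q - 1))) • of 1 := by
  ext x y
  have sum_column := Equiv.sum_comp ((Equiv.inv (Heis F)).trans (Equiv.mulRight y))
    fun w : Heis F => signChar F w.b
  simp only [Equiv.trans_apply, Equiv.inv_apply, Equiv.coe_mulRight] at sum_column
  simp only [Matrix.mul_apply, signMatrix_apply, of_apply, Pi.one_apply, one_mul,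
    sum_column, sum_signChar_b, Matrix.smul_apply, smul_eq_mul, mul_one]

theorem signMatrix_mul_self [FrobeniusStar q F] :
    signMatrix F * signMatrix F =
      (q ^ 3 : ℚ) • 1 + (-skewSign q * (q * (q - 1))) • signMatrix F - of 1 := by
  ext x y
  have sum_eq : ∑ w, signMatrix F x w * signMatrix F w y =
      ∑ w : Heis F, signChar F w.b * signChar F (w⁻¹ * (x⁻¹ * y)).b := by
    refine Fintype.sum_equiv (Equiv.mulLeft x⁻¹) _ _ fun w => ?_
    rw [Equiv.coe_mulLeft, _root_.mul_inv_rev, inv_inv, mul_assoc, mul_inv_cancel_left]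
    rfl
  rw [Matrix.mul_apply, sum_eq]
  obtain rfl | hxy := eq_or_ne x y
  · simp only [inv_mul_cancel, mul_one, Heis.inv_b, signChar_star, sum_signChar_b_mul_self]
    simp [signMatrix_apply_self]
  · rw [sum_signChar_b_mul_signChar_inv_mul_b fun h => hxy (inv_mul_eq_one.1 h)]
    simp [signMatrix_apply, hxy]

theorem heisProj_mul_self [FrobeniusStar q F] : heisProj F q * heisProj F q = heisProj F q := by
  have q_ne_zero : (q : ℚ) ≠ 0 := FrobeniusStar.cast_ne_zero q F
  have q_add_one_ne_zero : (q + 1 : ℚ) ≠ 0 := by positivity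
  have sign_sq := skewSign_mul_self q
  simp only [heisProj, smul_mul_assoc, mul_smul_comm, sub_mul, mul_sub, one_mul, mul_one,
    signMatrix_mul_self, signMatrix_mul_ones, ones_mul_signMatrix, ones_mul_ones]
  match_scalars <;> field_simp
  · linear_combination (q : ℚ) * sign_sq
  · linear_combination (-(q - 1 : ℚ) * skewSign q) * sign_sq
  · linear_combination (1 - 2 * q : ℚ) * sign_sq

theorem trace_heisProj [FrobeniusStar q F] : (heisProj F q).trace = q ^ 2 - q := by
  have q_ne_zero : (q : ℚ) ≠ 0 := FrobeniusStar.cast_ne_zero q F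
  have q_add_one_ne_zero : (q + 1 : ℚ) ≠ 0 := by positivity
  have card_eq := Heis.natCard_eq (F := F) q
  rw [Nat.card_eq_fintype_card] at card_eq
  simp only [Matrix.trace, diag_apply, heisProj_apply, signMatrix_apply_self, if_true,
    Finset.sum_const, Finset.card_univ, card_eq, nsmul_eq_mul]
  push_cast
  field_simp
  ring

theorem sum_signMatrix_center_mul [FrobeniusStar q F] (x y : Heis F) :
    ∑ z, signMatrix F (Heis.center z * x) y =
      if x.a = y.a then skewSign q * (q - 1) else -skewSign q := by
  have inv_mul_eq (z) :
      (Heis.center z * x)⁻¹ * y = Heis.center (Equiv.inv _ z) * (x⁻¹ * y) := by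
    rw [_root_.mul_inv_rev, Equiv.inv_apply, map_inv, ← map_inv, ← Heis.center_mul_comm, mul_assoc]
  simp only [signMatrix_apply, inv_mul_eq]
  refine (Equiv.sum_comp (Equiv.inv _) fun z =>
    signChar F (Heis.center z * (x⁻¹ * y)).b).trans ?_
  simp only [sum_signChar_center_mul, Heis.mul_a, Heis.inv_a, neg_add_eq_zero]

theorem sum_heisProj_center_mul [FrobeniusStar q F] (x y : Heis F) :
    ∑ z, heisProj F q (Heis.center z * x) y = 0 := by
  have q_ne_zero : (q : ℚ) ≠ 0 := FrobeniusStar.cast_ne_zero q F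
  have card_center : Fintype.card (Multiplicative (skewAdjoint F)) = q := by
    rw [← Nat.card_eq_fintype_card, FrobeniusStar.natCard_multiplicative_skewAdjoint q F]
  simp only [heisProj_apply, ← Finset.mul_sum, Finset.sum_sub_distrib, sum_ite_center_mul_eq,
    sum_signMatrix_center_mul, Finset.sum_const, Finset.card_univ, card_center, nsmul_eq_mul]
  have sign_sq := skewSign_mul_self q
  split_ifs <;> field_simp
  · linear_combination (-(q - 1 : ℚ)) * sign_sq
  · linear_combination sign_sq

end Projection

section Invariance

variable {F : Type*} [Field F] [StarRing F]

/-- The permutation action of `HeisTorus F` on the Heisenberg group, by translations and by the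
action of the torus. -/
def heisPerm : HeisTorus F →* Equiv.Perm (Heis F) :=
  SemidirectProduct.lift (MulAction.toPermHom (Heis F) (Heis F))
    (MulAction.toPermHom Fˣ (Heis F)) fun t => by
      refine MonoidHom.ext fun x => Equiv.ext fun y => ?_
      change t • x * y = t • (x * t⁻¹ • y)
      rw [smul_mul', smul_inv_smul]

theorem heisPerm_apply (g : HeisTorus F) (x : Heis F) :
    heisPerm g x = g.left * g.right • x := rfl

theorem heisProj_heisPerm_apply [Fintype F] [DecidableEq F] {q : ℕ} [FrobeniusStar q F]
    (g : HeisTorus F) (x y : Heis F) :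
    heisProj F q (heisPerm g x) (heisPerm g y) = heisProj F q x y := by
  have inv_mul_eq : (heisPerm g x)⁻¹ * heisPerm g y = g.right • (x⁻¹ * y) := by
    simp only [heisPerm_apply, smul_mul', smul_inv']
    group
  simp only [heisProj_apply, signMatrix_apply, inv_mul_eq, Heis.smul_b, map_mul,
    signChar_normHom, one_mul, EmbeddingLike.apply_eq_iff_eq]

end Invariance

section Divisibility

open SemidirectProduct Representation

variable {F : Type*} [Field F] [StarRing F]

namespace Heis

/-- The restriction of `Heis.lift` to the fixed field of the involution is a homomorphism. -/
def liftHom [NeZero (2 : F)] : Multiplicative (selfAdjoint F) →* Heis F where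
  toFun a := lift a.toAdd
  map_one' := by ext <;> simp
  map_mul' a b := by
    have star_a := selfAdjoint.mem_iff.1 a.toAdd.2
    have star_b := selfAdjoint.mem_iff.1 b.toAdd.2
    ext
    · simp
    · simp [-RCLike.star_def, star_a, star_b]
      field_simp
      ring

end Heis

variable {V : Type*} [AddCommGroup V] [Module ℂ V]
  {ρ : Representation ℂ (HeisTorus F) V}

theorem character_inl_eq_zero [Finite F] [NeZero (2 : F)]
    (h : ∑ z, ρ (inl (Heis.center z)) = 0) {x : Heis F} (hx : x.a ≠ 0) :
    ρ.character (inl x) = 0 := by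
  have sum_eq := sum_character_center_mul_eq_zero _ h (inl x)
  have character_eq (z) : ρ.character (inl (Heis.center z) * inl x) = ρ.character (inl x) := by
    obtain ⟨y, hy⟩ := Heis.exists_conj_eq_center_mul hx z
    rw [← map_mul, ← hy, map_mul, map_mul, map_inv, Representation.char_conj]
  simpa [character_eq] using sum_eq

variable [Fintype F]

theorem character_center_eq {q : ℕ} [FrobeniusStar q F] {z w : Multiplicative (skewAdjoint F)}
    (hz : z ≠ 1) (hw : w ≠ 1) :
    ρ.character (inl (Heis.center z)) = ρ.character (inl (Heis.center w)) := by
  obtain ⟨t, ht⟩ := Heis.exists_smul_center_eq hz hw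
  have conj_eq : (inr t * inl (Heis.center z) * (inr t)⁻¹ : HeisTorus F) = inl (Heis.center w) := by
    rw [inr_mul_inl, mul_inv_cancel_right, ht]
  rw [← conj_eq, Representation.char_conj]

variable {q : ℕ} [FrobeniusStar q F] [FiniteDimensional ℂ V]

theorem dvd_finrank_of_sum_center_eq_zero (h : ∑ z, ρ (inl (Heis.center z)) = 0) :
    q ∣ Module.finrank ℂ V := by
  rw [← FrobeniusStar.natCard_selfAdjoint q F, ← Nat.card_congr Multiplicative.toAdd]
  refine natCard_dvd_finrank_of_character_eq_zero (ρ.comp (inl.comp Heis.liftHom)) fun a ha =>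
    character_inl_eq_zero h fun ha_zero => ha ?_
  exact Multiplicative.toAdd.injective (Subtype.ext ha_zero)

theorem sub_one_dvd_finrank_of_sum_center_eq_zero (h : ∑ z, ρ (inl (Heis.center z)) = 0) :
    q - 1 ∣ Module.finrank ℂ V := by
  have three_le := FrobeniusStar.three_le q F
  have card_eq := FrobeniusStar.natCard_multiplicative_skewAdjoint q F
  have : Nontrivial (Multiplicative (skewAdjoint F)) :=
    Finite.one_lt_card_iff_nontrivial.1 (by omega)
  rw [← card_eq]
  refine natCard_sub_one_dvd_finrank_of_sum_character_eq_zero (ρ.comp (inl.comp Heis.center))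
    (fun z hz w hw => character_center_eq hz hw) ?_
  simpa [Representation.character] using! sum_character_center_mul_eq_zero _ h 1

theorem mul_sub_one_dvd_finrank_of_sum_center_eq_zero (h : ∑ z, ρ (inl (Heis.center z)) = 0) :
    q * (q - 1) ∣ Module.finrank ℂ V := by
  have three_le := FrobeniusStar.three_le q F
  have coprime : q.Coprime (q - 1) := by
    obtain ⟨m, rfl⟩ := Nat.exists_eq_add_one.2 (show 0 < q by omega)
    simp
  exact coprime.mul_dvd_of_dvd_of_dvd (dvd_finrank_of_sum_center_eq_zero h)
    (sub_one_dvd_finrank_of_sum_center_eq_zero h)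

theorem isIrreducible_of_sum_center_eq_zero (h : ∑ z, ρ (inl (Heis.center z)) = 0)
    (finrank_eq : Module.finrank ℂ V = q * (q - 1)) : ρ.IsIrreducible := by
  have three_le := FrobeniusStar.three_le q F
  refine isIrreducible_iff_forall_submodule.2 ⟨?_, fun W hW => ?_⟩
  · exact Module.nontrivial_of_finrank_pos (R := ℂ) <|
      finrank_eq ▸ Nat.mul_pos (by omega) (by omega)
  let σ := (⟨W, hW⟩ : Subrepresentation ρ).toRepresentation
  have sum_eq : ∑ z, σ (inl (Heis.center z)) = 0 := by
    ext v
    simpa [σ] using! LinearMap.congr_fun h v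
  have dvd := mul_sub_one_dvd_finrank_of_sum_center_eq_zero sum_eq
  rw [← finrank_eq] at dvd
  rcases Nat.eq_zero_or_pos (Module.finrank ℂ W) with h_zero | h_pos
  · exact .inl (Submodule.finrank_eq_zero.1 h_zero)
  · exact .inr (Submodule.eq_top_of_finrank_eq
      (le_antisymm W.finrank_le (Nat.le_of_dvd h_pos dvd)))

end Divisibility

section MatrixForm

theorem exists_forall_coe_eq_algEquiv {k G V : Type*} [Field k] [Group G] [AddCommGroup V]
    [Module k V] [FiniteDimensional k V] (ρ : Representation k G V) {n : ℕ}
    (finrank_eq : Module.finrank k V = n) :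
    ∃ (σ : G →* GL (Fin n) k) (e : Module.End k V ≃ₐ[k] Matrix (Fin n) (Fin n) k),
      ∀ g, (σ g : Matrix (Fin n) (Fin n) k) = e (ρ g) := by
  let e := LinearMap.toMatrixAlgEquiv (Module.finBasisOfFinrankEq k V finrank_eq)
  exact ⟨((e : _ →* _).comp ρ).toHomUnits, e, fun _ => rfl⟩

variable {G : Type} [Group G] {n : ℕ}

theorem exists_isInvariantForm [Finite G] {k : Type*} [Field k] [LinearOrder k]
    [IsStrictOrderedRing k] (σ : G →* GL (Fin n) k) : ∃ H, IsInvariantForm σ H := by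
  have := Fintype.ofFinite G
  let H : Matrix (Fin n) (Fin n) k := ∑ g, (σ g).valᵀ * (σ g).val
  refine ⟨H, isUnit_iff_ne_zero.2 fun det_eq => ?_, ?_, fun h => ?_⟩
  · obtain ⟨v, v_ne_zero, hv⟩ := exists_mulVec_eq_zero_iff.2 det_eq
    have sum_eq : ∑ g, (σ g).val *ᵥ v ⬝ᵥ (σ g).val *ᵥ v = 0 := by
      have dotProduct_eq := congrArg (v ⬝ᵥ ·) hv
      simpa [H, Matrix.sum_mulVec, dotProduct_sum, ← mulVec_mulVec, dotProduct_mulVec,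
        vecMul_transpose] using dotProduct_eq
    have dotProduct_nonneg (w : Fin n → k) : 0 ≤ w ⬝ᵥ w :=
      Finset.sum_nonneg fun i _ => mul_self_nonneg (w i)
    have self_eq := (Finset.sum_eq_zero_iff_of_nonneg fun g _ => dotProduct_nonneg _).1 sum_eq 1
      (Finset.mem_univ 1)
    simp only [map_one, Units.val_one, one_mulVec] at self_eq
    exact v_ne_zero (dotProduct_self_eq_zero.1 self_eq)
  · simp [H, transpose_sum]
  · simp only [H, Finset.mul_sum, Finset.sum_mul]
    refine Fintype.sum_equiv (Equiv.mulRight h) _ _ fun g => ?_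
    simp [Matrix.mul_assoc]

theorem IsInvariantForm.map {R S : Type*} [CommRing R] [CommRing S] {σ : G →* GL (Fin n) R}
    {H : Matrix (Fin n) (Fin n) R} (hH : IsInvariantForm σ H) (f : R →+* S) :
    IsInvariantForm ((GeneralLinearGroup.map f).comp σ) (f.mapMatrix H) where
  isUnit_det := by
    rw [← RingHom.map_det]
    exact hH.isUnit_det.map f
  transpose_eq := by rw [RingHom.mapMatrix_apply, ← transpose_map, hH.transpose_eq]
  transpose_mul_mul g := by
    conv_rhs => rw [← hH.transpose_mul_mul g]
    simp [Matrix.transpose_map]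

end MatrixForm

section Existence

open SemidirectProduct Representation

variable (F : Type*) [Field F] [StarRing F]

/-- The permutation representation of `HeisTorus F` on the rational functions on the Heisenberg
group. -/
def heisRep : Representation ℚ (HeisTorus F) (Heis F → ℚ) where
  toFun g := LinearMap.funLeft ℚ ℚ (heisPerm g⁻¹)
  map_one' := by
    ext
    simp
  map_mul' g h := by
    ext
    simp [LinearMap.funLeft]

variable {F}

theorem heisRep_apply (g : HeisTorus F) (v : Heis F → ℚ) (x : Heis F) :
    heisRep F g v x = v (heisPerm g⁻¹ x) := rfl

variable [Fintype F] [DecidableEq F] {q : ℕ} [FrobeniusStar q F]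

theorem heisProj_mulVec_heisRep (g : HeisTorus F) (v : Heis F → ℚ) :
    heisProj F q *ᵥ heisRep F g v = heisRep F g (heisProj F q *ᵥ v) := by
  ext x
  simp only [mulVec, dotProduct, heisRep_apply]
  refine Fintype.sum_equiv (heisPerm g⁻¹) _ _ fun y => ?_
  rw [heisProj_heisPerm_apply]

variable (F q) in
/-- The image of the projection `heisProj F q`, as a subrepresentation. -/
def heisSubrep : Subrepresentation (heisRep F) where
  toSubmodule := LinearMap.range (toLin' (heisProj F q))
  apply_mem_toSubmodule g := by
    rintro _ ⟨v, rfl⟩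
    exact ⟨heisRep F g v, heisProj_mulVec_heisRep g v⟩

theorem finrank_heisSubrep : Module.finrank ℚ (heisSubrep F q).toSubmodule = q * (q - 1) := by
  have isProj : LinearMap.IsProj (heisSubrep F q).toSubmodule (toLin' (heisProj F q)) := by
    refine ⟨fun v => ⟨v, rfl⟩, ?_⟩
    rintro _ ⟨v, rfl⟩
    rw [← toLin'_mul_apply, heisProj_mul_self]
  have trace_eq := isProj.trace
  rw [trace_toLin'_eq, trace_heisProj] at trace_eq
  have three_le := FrobeniusStar.three_le q F
  rw [← Nat.cast_inj (R := ℚ), ← trace_eq, Nat.cast_mul, Nat.cast_sub (by omega)]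
  push_cast
  ring

theorem sum_heisRep_center_mulVec_heisProj (v : Heis F → ℚ) :
    ∑ z, heisRep F (inl (Heis.center z)) (heisProj F q *ᵥ v) = 0 := by
  ext x
  have heisPerm_eq (z : Multiplicative (skewAdjoint F)) :
      heisPerm (inl (Heis.center z))⁻¹ x = Heis.center (Equiv.inv _ z) * x := by
    rw [← map_inv, ← map_inv, heisPerm_apply, left_inl, right_inl, one_smul, Equiv.inv_apply]
  simp only [Finset.sum_apply, heisRep_apply, heisPerm_eq, Pi.zero_apply]
  refine (Equiv.sum_comp (Equiv.inv _) fun z =>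
    (heisProj F q *ᵥ v) (Heis.center z * x)).trans ?_
  simp only [mulVec, dotProduct]
  rw [Finset.sum_comm]
  simp only [← Finset.sum_mul, sum_heisProj_center_mul, zero_mul, Finset.sum_const_zero]

theorem sum_heisSubrep_center :
    ∑ z, (heisSubrep F q).toRepresentation (inl (Heis.center z)) = 0 := by
  refine LinearMap.ext ?_
  rintro ⟨_, v, rfl⟩
  refine Subtype.ext ?_
  simpa using! sum_heisRep_center_mulVec_heisProj v

end Existence

section ExistenceComplex

open SemidirectProduct Representation

variable {F : Type} [Field F] [StarRing F] [Fintype F]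

theorem exists_rational_isIrredRep (q : ℕ) [FrobeniusStar q F] :
    ∃ σ : HeisTorus F →* GL (Fin (q * (q - 1))) ℚ,
      IsIrredRep ((GeneralLinearGroup.map (Rat.castHom ℂ)).comp σ) := by
  classical
  obtain ⟨σ, e, hσ⟩ := exists_forall_coe_eq_algEquiv (heisSubrep F q).toRepresentation
    finrank_heisSubrep
  refine ⟨σ, (isIrredRep_iff_isIrreducible _).2 (isIrreducible_of_sum_center_eq_zero ?_ ?_)⟩
  · have sum_eq : ∑ z, (σ (inl (Heis.center z))).val = 0 := by
      simp only [hσ, ← map_sum, sum_heisSubrep_center, map_zero]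
    have := congrArg (toLin' ∘ (Rat.castHom ℂ).mapMatrix) sum_eq
    simpa [toRep_apply] using! this
  · simp

end ExistenceComplex

section OrthogonalDiscriminant

variable {ι : Type*} {R S : Type*} [CommRing R] [CommRing S] {φ : R →+* S}

theorem exists_map_eq_of_forall_mem_range {M : Matrix ι ι S} (h : ∀ i j, M i j ∈ φ.range) :
    ∃ M' : Matrix ι ι R, M'.map φ = M := by
  choose M' hM' using h
  exact ⟨of M', ext hM'⟩

theorem exists_monoidHom_mapMatrix_eq [Fintype ι] [DecidableEq ι] {A : Type*} [Monoid A]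
    (hφ : Function.Injective φ) (f : A →* Matrix ι ι S)
    (h : ∀ a i j, f a i j ∈ φ.range) :
    ∃ f' : A →* Matrix ι ι R, ∀ a, φ.mapMatrix (f' a) = f a := by
  choose f' hf' using fun a => exists_map_eq_of_forall_mem_range (h a)
  have injective := map_injective (m := ι) (n := ι) hφ
  refine ⟨⟨⟨f', injective ?_⟩, fun a b => injective ?_⟩, hf'⟩
  · simp [hf']
  · simp [hf', Matrix.map_mul]

theorem exists_mem_range_det_eq_natCard_mul_sq {K L : Type*} [Field K] [CharZero K] [Field L]
    (φ : K →+* L) {A : Type*} [CommGroup A] [Finite A] {ι : Type*} [Fintype ι] [DecidableEq ι]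
    {f : A →* Matrix ι ι L} (hf : ∀ a i j, f a i j ∈ φ.range) {m : ℕ} (hA : Odd (Nat.card A))
    (hm : Odd m) (h_ne : ∀ a ≠ 1, (f a).trace = -m) (h_one : (f 1).trace = m * (Nat.card A - 1))
    {H : Matrix ι ι L} (hH : ∀ i j, H i j ∈ φ.range) (det_ne_zero : H.det ≠ 0)
    (transpose_eq : Hᵀ = H) (invariant : ∀ a, (f a)ᵀ * H * f a = H) :
    ∃ z ∈ φ.range, z ≠ 0 ∧ H.det = Nat.card A * z ^ 2 := by
  obtain ⟨f', hf'⟩ := exists_monoidHom_mapMatrix_eq φ.injective f hf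
  obtain ⟨H', rfl⟩ := exists_map_eq_of_forall_mem_range hH
  have injective := map_injective (m := ι) (n := ι) φ.injective
  have trace_eq (a) : φ (f' a).trace = (f a).trace := by rw [AddMonoidHom.map_trace, ← hf']; rfl
  have det_eq : φ H'.det = (H'.map φ).det := φ.map_det H'
  have natCard_ne_zero : (Nat.card A : K) ≠ 0 := Nat.cast_ne_zero.2 Nat.card_pos.ne'
  obtain ⟨r, hr⟩ : IsSquare (Nat.card A * H'.det) := by
    refine isSquare_card_mul_det (f := f') hA hm (fun a ha => φ.injective ?_) (φ.injective ?_)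
      (injective ?_) fun a => injective ?_
    · simp [trace_eq, h_ne a ha]
    · rw [trace_eq, h_one]
      simp
    · simpa [transpose_map] using transpose_eq
    · simpa [transpose_map, Matrix.map_mul, ← hf'] using invariant a
  have det_eq_mul_sq : H'.det = Nat.card A * (r / Nat.card A) ^ 2 := by
    field_simp
    linear_combination hr
  refine ⟨φ (r / Nat.card A), ⟨_, rfl⟩, fun h => det_ne_zero ?_, ?_⟩
  · rw [← det_eq, det_eq_mul_sq, map_mul, map_pow, h, zero_pow two_ne_zero, mul_zero]
  · rw [← det_eq, det_eq_mul_sq, map_mul, map_pow, map_natCast]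

theorem hasOrthDisc_of_apply_eq_neg {G : Type} [Group G] {χ : G → ℂ} {A : Type*} [CommGroup A]
    [Finite A] (i : A →* G) (hA : Odd (Nat.card A)) {m : ℕ} (hm : Odd m)
    (h_ne : ∀ a ≠ 1, χ (i a) = -m) (h_one : χ 1 = m * (Nat.card A - 1)) {n : ℕ}
    (hn : n = m * (Nat.card A - 1)) :
    HasOrthDisc χ ((-1) ^ (n * (n - 1) / 2) * Nat.card A) := by
  rintro n' ρ rfl hρ H hH isUnit_det transpose_eq invariant
  obtain rfl : n = n' := by
    have degree := charOf_one ρ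
    rw [h_one, ← Nat.cast_pred hA.pos, ← Nat.cast_mul, ← hn] at degree
    exact_mod_cast degree
  obtain ⟨z, hz, z_ne_zero, det_eq⟩ := exists_mem_range_det_eq_natCard_mul_sq
    (charField (charOf ρ)).subtype (f := (Units.coeHom _).comp (ρ.comp i))
    (fun a j k => by simpa using hρ (i a) j k) hA hm h_ne (by simpa [charOf] using! h_one)
    (fun j k => by simpa using hH j k) isUnit_det.ne_zero transpose_eq fun a => invariant (i a)
  exact ⟨z, by simpa using hz, z_ne_zero, by rw [det_eq, mul_assoc]⟩

theorem neg_one_pow_mul_sub_one_div_two {q : ℕ} (hq : Odd q) :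
    (-1 : ℂ) ^ (q * (q - 1) * (q * (q - 1) - 1) / 2) = (-1) ^ ((q - 1) / 2) := by
  obtain ⟨k, rfl⟩ := hq
  rw [Nat.add_sub_cancel, Nat.mul_div_cancel_left k two_pos]
  have half_eq : (2 * k + 1) * (2 * k) * ((2 * k + 1) * (2 * k) - 1) / 2 =
      k * ((2 * k + 1) * ((2 * k + 1) * (2 * k) - 1)) :=
    Nat.div_eq_of_eq_mul_left two_pos (by ring)
  rw [half_eq, pow_mul]
  rcases k.even_or_odd with even | odd
  · simp [even.neg_one_pow]
  · have odd_mul : Odd ((2 * k + 1) * ((2 * k + 1) * (2 * k) - 1)) :=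
      (odd_two_mul_add_one k).mul
        (Nat.Even.sub_odd (Nat.mul_pos (by omega) (by have := odd.pos; omega)) (by simp) odd_one)
    rw [odd.neg_one_pow, odd_mul.neg_one_pow]

end OrthogonalDiscriminant

section RationalOrthogonal

variable {G H : Type} [Group G] [Group H]

/-- The properties that single out the character `ϑ` of the Borel subgroup. -/
structure IsRationalOrthogonal (q : ℕ) (χ : G → ℂ) : Prop where
  isIrrChar : IsIrrChar χ
  isRationalChar : IsRationalChar χ
  apply_one : χ 1 = (q ^ 2 - q : ℕ)
  FSind_eq_one : FSind χ = 1

theorem RealizableOverQ.comp {χ : G → ℂ} (h : RealizableOverQ χ) {E : Type*} [FunLike E H G]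
    [MonoidHomClass E H G] (e : E) : RealizableOverQ (χ ∘ e) := by
  obtain ⟨n, ρ, rfl, rational⟩ := h
  exact ⟨n, ρ.comp (e : H →* G), rfl, fun g => rational (e g)⟩

theorem RealizableOverQ.isRationalChar {χ : G → ℂ} (h : RealizableOverQ χ) :
    IsRationalChar χ := by
  obtain ⟨n, ρ, rfl, rational⟩ := h
  intro g
  choose M hM using rational g
  exact ⟨∑ i, M i i, by simp [charOf, Matrix.trace, hM]⟩

theorem realizableOverQ_charOf_map {n : ℕ} (σ : G →* GL (Fin n) ℚ) :
    RealizableOverQ (charOf ((GeneralLinearGroup.map (Rat.castHom ℂ)).comp σ)) :=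
  ⟨n, _, rfl, fun g i j => ⟨(σ g).val i j, rfl⟩⟩

theorem FSind_charOf_map_eq_one [Finite G] {n : ℕ} {σ : G →* GL (Fin n) ℚ}
    (irreducible : IsIrredRep ((GeneralLinearGroup.map (Rat.castHom ℂ)).comp σ)) :
    FSind (charOf ((GeneralLinearGroup.map (Rat.castHom ℂ)).comp σ)) = 1 := by
  obtain ⟨H, hH⟩ := exists_isInvariantForm σ
  exact FSind_eq_one irreducible (hH.map _)

namespace IsRationalOrthogonal

variable {q : ℕ}

theorem comp {χ : G → ℂ} (h : IsRationalOrthogonal q χ) (e : H ≃* G) :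
    IsRationalOrthogonal q (χ ∘ e) where
  isIrrChar := by
    obtain ⟨n, ρ, irreducible, rfl⟩ := h.isIrrChar
    refine ⟨n, ρ.comp e, ⟨irreducible.1, fun W hW => irreducible.2 W fun g => ?_⟩, rfl⟩
    simpa using hW (e.symm g)
  isRationalChar g := h.isRationalChar (e g)
  apply_one := by rw [Function.comp_apply, map_one, h.apply_one]
  FSind_eq_one := by
    rw [← h.FSind_eq_one, FSind, FSind, Nat.card_congr e.toEquiv]
    simp only [Function.comp_apply, map_mul]
    exact congrArg _ <| finsum_comp_equiv e.toEquiv (f := fun g => χ (g * g))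

variable {F : Type} [Field F] [StarRing F] [Fintype F] [FrobeniusStar q F]

theorem exists_isCandidate [DecidableEq F] {χ : HeisTorus F → ℂ} (h : IsRationalOrthogonal q χ) :
    ∃ ψ : HeisTorus F → ℚ, (∀ g, χ g = ψ g) ∧ IsCandidate q ψ := by
  obtain ⟨n, ρ, irreducible, rfl⟩ := h.isIrrChar
  exact Paper.exists_isCandidate irreducible h.isRationalChar h.apply_one h.FSind_eq_one

theorem unique {χ χ' : G → ℂ} (h : IsRationalOrthogonal q χ) (h' : IsRationalOrthogonal q χ')
    (e : HeisTorus F ≃* G) : χ = χ' := by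
  classical
  obtain ⟨ψ, hψ, candidate⟩ := (h.comp e).exists_isCandidate
  obtain ⟨ψ', hψ', candidate'⟩ := (h'.comp e).exists_isCandidate
  obtain rfl := candidate.unique candidate'
  exact e.surjective.injective_comp_right (funext fun g => (hψ g).trans (hψ' g).symm)

theorem hasOrthDisc {χ : G → ℂ} (h : IsRationalOrthogonal q χ) (e : HeisTorus F ≃* G) :
    HasOrthDisc χ ((-1) ^ ((q - 1) / 2) * q) := by
  classical
  have odd : Odd q := FrobeniusStar.odd F
  have card_eq := FrobeniusStar.natCard_multiplicative_skewAdjoint q F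
  obtain ⟨ψ, hψ, candidate⟩ := (h.comp e).exists_isCandidate
  have := hasOrthDisc_of_apply_eq_neg (χ := χ) (m := q) (n := q * (q - 1))
    (e.toMonoidHom.comp (SemidirectProduct.inl.comp (Heis.center : _ →* Heis F)))
    (by rwa [card_eq]) odd (fun a ha => ?_) ?_ (by rw [card_eq])
  · rwa [neg_one_pow_mul_sub_one_div_two odd, card_eq] at this
  · exact (hψ _).trans (by simp [candidate.apply_center ha])
  · rw [h.apply_one, card_eq, Nat.cast_sub (Nat.le_self_pow two_ne_zero q)]
    push_cast
    ring

end IsRationalOrthogonal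

theorem exists_isRationalOrthogonal {q : ℕ} {F : Type} [Field F] [StarRing F] [Fintype F]
    [FrobeniusStar q F] (e : HeisTorus F ≃* G) :
    ∃ χ : G → ℂ, IsRationalOrthogonal q χ ∧ RealizableOverQ χ := by
  obtain ⟨σ, irreducible⟩ := exists_rational_isIrredRep (F := F) q
  have realizable := realizableOverQ_charOf_map σ
  have degree_eq : q * (q - 1) = q ^ 2 - q := by rw [sq, Nat.mul_sub_one]
  exact ⟨_, IsRationalOrthogonal.comp ⟨⟨_, _, irreducible, rfl⟩, realizable.isRationalChar,
    (charOf_one _).trans (congrArg _ degree_eq), FSind_charOf_map_eq_one irreducible⟩ e.symm,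
    realizable.comp e.symm⟩

/-- The `p ^ k`-power map as the involution of the field of `(p ^ k) ^ 2` elements. -/
abbrev starRingOfExpChar (p k : ℕ) (F : Type*) [Field F] [Fintype F] [ExpChar F p]
    (hF : Fintype.card F = (p ^ k) ^ 2) : StarRing F where
  star x := x ^ p ^ k
  star_involutive x := by
    change (x ^ p ^ k) ^ p ^ k = x
    rw [← pow_mul, ← sq, ← hF, FiniteField.pow_card]
  star_mul x y := by
    change (x * y) ^ p ^ k = y ^ p ^ k * x ^ p ^ k
    rw [mul_pow, mul_comm]
  star_add x y := add_pow_expChar_pow x y p k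

end RationalOrthogonal

/-- the Borel subgroup of `SU₃(q)`, `q` odd, has exactly one rational
irreducible character `ϑ` of degree `q²-q` with Frobenius–Schur indicator `+1`;
it is realizable over `ℚ` and has orthogonal discriminant `(-1)^((q-1)/2)·q`. -/
theorem stmt11 (p k q : ℕ) (hp : p.Prime) (hpodd : Odd p) (hk : 0 < k) (hq : q = p ^ k)
    (F : Type) [Field F] [Fintype F] [ExpChar F p] (hF : Fintype.card F = q ^ 2) :
    (∃! ϑ : ↥(Borel p k F) → ℂ, IsIrrChar ϑ ∧ IsRationalChar ϑ ∧
      ϑ 1 = ((q ^ 2 - q : ℕ) : ℂ) ∧ FSind ϑ = 1) ∧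
    ∀ ϑ : ↥(Borel p k F) → ℂ, IsIrrChar ϑ → IsRationalChar ϑ →
      ϑ 1 = ((q ^ 2 - q : ℕ) : ℂ) → FSind ϑ = 1 →
      RealizableOverQ ϑ ∧ HasOrthDisc ϑ ((-1 : ℂ) ^ ((q - 1) / 2) * (q : ℂ)) := by
  subst hq
  let _ : StarRing F := starRingOfExpChar p k F hF
  have : FrobeniusStar (p ^ k) F := ⟨hpodd.pow, hF, fun _ => rfl⟩
  let e : HeisTorus F ≃* Borel p k F := borelEquiv fun _ => rfl
  obtain ⟨θ, hθ, realizable⟩ := exists_isRationalOrthogonal e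
  have eq_of_isRationalOrthogonal {ϑ} (h : IsRationalOrthogonal (p ^ k) ϑ) : ϑ = θ := h.unique hθ e
  refine ⟨⟨θ, ⟨hθ.1, hθ.2, hθ.3, hθ.4⟩, fun ϑ ⟨irreducible, rational, degree, indicator⟩ =>
    eq_of_isRationalOrthogonal ⟨irreducible, rational, degree, indicator⟩⟩, ?_⟩
  intro ϑ irreducible rational degree indicator
  have hϑ : IsRationalOrthogonal (p ^ k) ϑ := ⟨irreducible, rational, degree, indicator⟩
  exact ⟨eq_of_isRationalOrthogonal hϑ ▸ realizable, hϑ.hasOrthDisc e⟩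

end Paper
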